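/- arXiv:1708.03250 — 2 statements merged into one kernel-verified Lean document; each statement's English description precedes it below -/
import Mathlib

section
/- Let P_1, ..., P_n be lattice polytopes in R^n. Then MV(P_1,...,P_n) ≥ 1 if and only if for every nonempty subset I of [n], the dimension of the Minkowski sum P_I is at least |I|. (Bernstein's criterion for positivity of the mixed volume.) -/
open scoped Pointwise
open MeasureTheory Finset

def IsLatticePt {n : ℕ} (x : Fin n → ℝ) : Prop := ∀ i, ∃ z : ℤ, x i = (z : ℝ)

def IsLatticePolytope {n : ℕ} (P : Set (Fin n → ℝ)) : Prop :=
  ∃ V : Finset (Fin n → ℝ), V.Nonempty ∧ (∀ v ∈ V, IsLatticePt v) ∧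
    P = convexHull ℝ (V : Set (Fin n → ℝ))

noncomputable def adim {n : ℕ} (A : Set (Fin n → ℝ)) : ℕ :=
  Module.finrank ℝ (affineSpan ℝ A).direction

def relintLat {n : ℕ} (A : Set (Fin n → ℝ)) : Set (Fin n → ℝ) :=
  {x ∈ intrinsicInterior ℝ A | IsLatticePt x}

def intLat {n : ℕ} (A : Set (Fin n → ℝ)) : Set (Fin n → ℝ) :=
  {x ∈ interior A | IsLatticePt x}

noncomputable def mixedVol {n m : ℕ} (P : Fin m → Set (Fin n → ℝ)) : ℝ :=
  ∑ I : Finset (Fin m), (-1 : ℝ) ^ (m - I.card) * (volume (∑ i ∈ I, P i)).toReal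


theorem BK.sum_neg_one {n : ℕ} (S : Finset (Fin n)) :
    ∑ J : Finset (Fin n), (-1 : ℝ) ^ (n - J.card) * (if S ⊆ J then 1 else 0)
      = if S = Finset.univ then 1 else 0 := by
  have h := Finset.prod_add (fun i : Fin n => (1:ℝ)) (fun i => if i ∈ S then 0 else -1) Finset.univ
  have h1 : ∀ J : Finset (Fin n), (-1 : ℝ) ^ (n - J.card) * (if S ⊆ J then 1 else 0)
      = (∏ i ∈ J, (1:ℝ)) * ∏ i ∈ Finset.univ \ J, (if i ∈ S then (0:ℝ) else -1) := by
    intro J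
    rw [Finset.prod_const_one, one_mul]
    by_cases hS : S ⊆ J
    · rw [if_pos hS, Finset.prod_congr rfl (g := fun _ => (-1:ℝ))]
      · simp [Finset.card_sdiff]
      · intro i hi
        rw [if_neg]
        intro h; exact (Finset.mem_sdiff.1 hi).2 (hS h)
    · rw [if_neg hS]
      obtain ⟨i, hi, hiJ⟩ := Finset.not_subset.1 hS
      rw [Finset.prod_eq_zero (i := i) (by simpa using hiJ) (by simp [hi])]
      simp
  rw [Finset.sum_congr rfl (fun J _ => h1 J)]
  rw [Finset.powerset_univ] at h
  rw [← h]
  by_cases hS : S = Finset.univ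
  · subst hS; simp
  · rw [if_neg hS]
    obtain ⟨i, hi⟩ : ∃ i, i ∉ S := by
      by_contra! h; exact hS (Finset.eq_univ_iff_forall.2 h)
    exact Finset.prod_eq_zero (Finset.mem_univ i) (by simp [hi])

/-- polarization of a family -/
theorem BK.polar {n : ℕ} (F : (Fin n → Fin n) → ℝ) :
    ∑ J : Finset (Fin n), (-1 : ℝ) ^ (n - J.card) * ∑ r ∈ Fintype.piFinset (fun _ : Fin n => J), F r
      = ∑ σ : Equiv.Perm (Fin n), F σ := by
  have h1 : ∀ J : Finset (Fin n), ∑ r ∈ Fintype.piFinset (fun _ : Fin n => J), F r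
      = ∑ r : Fin n → Fin n, (if Finset.univ.image r ⊆ J then 1 else 0) * F r := by
    intro J
    simp only [ite_mul, one_mul, zero_mul]
    rw [← Finset.sum_filter]
    apply Finset.sum_congr _ (fun _ _ => rfl)
    ext r
    simp [Finset.subset_iff]
  simp only [h1, Finset.mul_sum]
  rw [Finset.sum_comm]
  simp only [← mul_assoc, ← Finset.sum_mul, BK.sum_neg_one]
  simp only [ite_mul, one_mul, zero_mul]
  rw [← Finset.sum_filter]
  symm
  refine Finset.sum_bij (fun σ _ => (σ : Fin n → Fin n)) ?_ ?_ ?_ ?_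
  · intro σ _
    simp [Finset.eq_univ_iff_forall]
    intro x; exact ⟨σ.symm x, by simp⟩
  · intro a _ b _ h; exact DFunLike.coe_injective h
  · intro r hr
    have hs : Function.Surjective r := by
      intro y
      have := (Finset.mem_filter.1 hr).2
      have h2 : y ∈ Finset.univ.image r := by rw [this]; simp
      simpa using h2
    exact ⟨Equiv.ofBijective r (Finite.injective_iff_bijective.1 (Finite.injective_iff_surjective.2 hs)), by simp, rfl⟩
  · intros; rfl

theorem BK.mixed_disc {n : ℕ} {α : Type*} (S : Fin n → Finset α) (q : Fin n → α → ℝ)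
    (u : α → Fin n → ℝ) :
    ∑ J : Finset (Fin n), (-1 : ℝ) ^ (n - J.card) *
        (∑ i ∈ J, ∑ a ∈ S i, q i a • Matrix.vecMulVec (u a) (u a)).det
      = ∑ b ∈ Fintype.piFinset S, (∏ i, q i (b i)) * (Matrix.of fun i => u (b i)).det ^ 2 := by
  classical
  have h1 : ∀ J : Finset (Fin n), (∑ i ∈ J, ∑ a ∈ S i, q i a • Matrix.vecMulVec (u a) (u a)).det
      = ∑ r ∈ Fintype.piFinset (fun _ : Fin n => J),
        Matrix.det (Matrix.of fun k => ∑ a ∈ S (r k), (q (r k) a * u a k) • u a) := by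
    intro J
    have := (Matrix.detRowAlternating (n := Fin n) (R := ℝ)).toMultilinearMap.map_sum_finset
      (fun k i => ∑ a ∈ S i, (q i a * u a k) • u a) (fun _ => J)
    refine Eq.trans ?_ this
    change _ = Matrix.det _
    congr 1
    ext k l
    simp [Matrix.sum_apply, Matrix.vecMulVec_apply, mul_assoc]
  simp only [h1]
  rw [BK.polar (fun r => Matrix.det (Matrix.of fun k => ∑ a ∈ S (r k), (q (r k) a * u a k) • u a))]
  have h2 : ∀ σ : Equiv.Perm (Fin n),
      Matrix.det (Matrix.of fun k => ∑ a ∈ S (σ k), (q (σ k) a * u a k) • u a)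
      = ∑ b ∈ Fintype.piFinset S, (∏ i, q i (b i)) *
        ((Equiv.Perm.sign σ : ℤ) * ∏ k, u (b (σ k)) k) * (Matrix.of fun i => u (b i)).det := by
    intro σ
    have := (Matrix.detRowAlternating (n := Fin n) (R := ℝ)).toMultilinearMap.map_sum_finset
      (fun k a => (q (σ k) a * u a k) • u a) (fun k => S (σ k))
    refine Eq.trans this ?_
    refine Finset.sum_bij' (fun c _ => c ∘ σ.symm) (fun b _ => b ∘ σ) ?_ ?_ ?_ ?_ ?_
    · intro c hc
      rw [Fintype.mem_piFinset] at hc ⊢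
      intro i
      simpa using hc (σ.symm i)
    · intro c hc
      rw [Fintype.mem_piFinset] at hc ⊢
      intro i
      simpa using hc (σ i)
    · intro c hc; ext; simp
    · intro c hc; ext; simp
    · intro c hc
      rw [MultilinearMap.map_smul_univ]
      have e := Matrix.det_permute σ (Matrix.of fun i => u ((c ∘ σ.symm) i))
      have e2 : (Matrix.of fun i => u ((c ∘ σ.symm) i)).submatrix σ id = Matrix.of fun k => u (c k) := by
        ext k l; simp
      rw [e2] at e
      change _ * Matrix.det (Matrix.of fun k => u (c k)) = _
      rw [e, Finset.prod_mul_distrib, ← Equiv.prod_comp σ (fun i => q i ((c ∘ σ.symm) i))]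
      simp
      ring
  rw [Finset.sum_congr rfl (fun σ _ => h2 σ), Finset.sum_comm]
  apply Finset.sum_congr rfl
  intro b _
  rw [← Finset.sum_mul, ← Finset.mul_sum, pow_two, ← mul_assoc]
  congr 2
  rw [Matrix.det_apply']
  simp

noncomputable def BK.rk {ι E : Type*} [AddCommGroup E] [Module ℝ E]
    (A : ι → Finset E) (I : Finset ι) : ℕ :=
  Module.finrank ℝ (Submodule.span ℝ (⋃ i ∈ I, (A i : Set E)))

theorem BK.rado_step {ι E : Type*} [DecidableEq ι] [DecidableEq E] [AddCommGroup E] [Module ℝ E]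
    [FiniteDimensional ℝ E]
    (A : ι → Finset E) (hA : ∀ I : Finset ι, I.card ≤ BK.rk A I) (j : ι) (x y : E)
    (hx : x ∈ A j) (hy : y ∈ A j) (hxy : x ≠ y) :
    (∀ I : Finset ι, I.card ≤ BK.rk (Function.update A j ((A j).erase x)) I) ∨
    (∀ I : Finset ι, I.card ≤ BK.rk (Function.update A j ((A j).erase y)) I) := by
  by_contra! hcon
  obtain ⟨⟨I, hI⟩, ⟨K, hK⟩⟩ := hcon
  have key : ∀ (z : E) (I : Finset ι), BK.rk (Function.update A j ((A j).erase z)) I < I.card → j ∈ I := by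
    intro z I hI
    by_contra hj
    have : BK.rk (Function.update A j ((A j).erase z)) I = BK.rk A I := by
      unfold BK.rk
      have e : (⋃ i ∈ I, (Function.update A j ((A j).erase z) i : Set E)) = ⋃ i ∈ I, (A i : Set E) := by
        refine Set.iUnion_congr fun i => Set.iUnion_congr fun hi => ?_
        rw [Function.update_of_ne]
        rintro rfl; exact hj hi
      rw [e]
    have := hA I
    omega
  have hjI := key x I hI
  have hjK := key y K hK
  unfold BK.rk at hI hK
  set s := Submodule.span ℝ (⋃ i ∈ I, ((Function.update A j ((A j).erase x)) i : Set E))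
  set t := Submodule.span ℝ (⋃ i ∈ K, ((Function.update A j ((A j).erase y)) i : Set E))
  have hst := Submodule.finrank_sup_add_finrank_inf_eq s t
  have h1 : BK.rk A (I ∪ K) ≤ Module.finrank ℝ ↥(s ⊔ t) := by
    apply Submodule.finrank_mono
    rw [Submodule.span_le]
    intro w hw
    simp only [Set.mem_iUnion] at hw
    obtain ⟨i, hi, hw⟩ := hw
    by_cases hij : i = j
    · subst hij
      by_cases hwx : w = x
      · apply Submodule.mem_sup_right
        apply Submodule.subset_span
        simp only [Set.mem_iUnion]
        refine ⟨i, hjK, ?_⟩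
        subst hwx
        simpa using ⟨hx, hxy⟩
      · apply Submodule.mem_sup_left
        apply Submodule.subset_span
        simp only [Set.mem_iUnion]
        refine ⟨i, hjI, ?_⟩
        simpa using ⟨by simpa using hw, hwx⟩
    · rcases Finset.mem_union.1 hi with h | h
      · apply Submodule.mem_sup_left
        apply Submodule.subset_span
        simp only [Set.mem_iUnion]
        exact ⟨i, h, by rwa [Function.update_of_ne hij]⟩
      · apply Submodule.mem_sup_right
        apply Submodule.subset_span
        simp only [Set.mem_iUnion]
        exact ⟨i, h, by rwa [Function.update_of_ne hij]⟩
  have h2 : BK.rk A ((I ∩ K).erase j) ≤ Module.finrank ℝ ↥(s ⊓ t) := by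
    apply Submodule.finrank_mono
    rw [Submodule.span_le]
    intro w hw
    simp only [Set.mem_iUnion] at hw
    obtain ⟨i, hi, hw⟩ := hw
    simp only [Finset.mem_erase, Finset.mem_inter] at hi
    refine ⟨Submodule.subset_span ?_, Submodule.subset_span ?_⟩ <;> simp only [Set.mem_iUnion]
    · exact ⟨i, hi.2.1, by rwa [Function.update_of_ne hi.1]⟩
    · exact ⟨i, hi.2.2, by rwa [Function.update_of_ne hi.1]⟩
  have h3 := hA (I ∪ K)
  have h4 := hA ((I ∩ K).erase j)
  rw [Finset.card_erase_of_mem (Finset.mem_inter.2 ⟨hjI, hjK⟩)] at h4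
  have h5 := Finset.card_union_add_card_inter I K
  have h6 : 0 < (I ∩ K).card := Finset.card_pos.2 ⟨j, Finset.mem_inter.2 ⟨hjI, hjK⟩⟩
  omega

theorem BK.rado {ι E : Type*} [Fintype ι] [DecidableEq ι] [DecidableEq E] [AddCommGroup E] [Module ℝ E]
    [FiniteDimensional ℝ E] (N : ℕ) :
    ∀ (A : ι → Finset E) (_ : ∑ i, (A i).card = N) (_ : ∀ I : Finset ι, I.card ≤ BK.rk A I),
    ∃ f : ι → E, (∀ i, f i ∈ A i) ∧ LinearIndependent ℝ f := by
  induction N using Nat.strong_induction_on with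
  | _ N ih =>
  intro A hN hA
  by_cases h : ∃ j, ∃ x ∈ A j, ∃ y ∈ A j, x ≠ y
  · obtain ⟨j, x, hx, y, hy, hxy⟩ := h
    have go : ∀ z ∈ A j, (∀ I : Finset ι, I.card ≤ BK.rk (Function.update A j ((A j).erase z)) I) →
        ∃ f : ι → E, (∀ i, f i ∈ A i) ∧ LinearIndependent ℝ f := by
      intro z hz hI
      obtain ⟨f, hf, hl⟩ := ih _ (by
        rw [← hN]
        apply Finset.sum_lt_sum
        · intro i _
          by_cases hij : i = j
          · subst hij; rw [Function.update_self]; exact Finset.card_le_card (Finset.erase_subset _ _)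
          · rw [Function.update_of_ne hij]
        · refine ⟨j, Finset.mem_univ _, ?_⟩
          rw [Function.update_self]; exact Finset.card_erase_lt_of_mem hz) _ rfl hI
      refine ⟨f, fun i => ?_, hl⟩
      have := hf i
      by_cases hij : i = j
      · subst hij; rw [Function.update_self] at this; exact Finset.mem_of_mem_erase this
      · rwa [Function.update_of_ne hij] at this
    rcases BK.rado_step A hA j x y hx hy hxy with h | h
    · exact go x hx h
    · exact go y hy h
  · push Not at h
    have hne : ∀ i, (A i).Nonempty := by
      intro i
      by_contra hi
      rw [Finset.not_nonempty_iff_eq_empty] at hi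
      have := hA {i}
      simp [BK.rk, hi] at this
    choose f hf using hne
    refine ⟨f, hf, ?_⟩
    rw [linearIndependent_iff_card_le_finrank_span]
    have := hA Finset.univ
    rw [Finset.card_univ] at this
    refine this.trans ?_
    apply Submodule.finrank_mono
    apply Submodule.span_mono
    intro w hw
    simp only [Set.mem_iUnion] at hw
    obtain ⟨i, _, hw⟩ := hw
    exact ⟨i, h i _ (hf i) _ hw⟩

theorem BK.dir_le {n : ℕ} (V : Fin n → Finset (Fin n → ℝ)) (I : Finset (Fin n)) :
    (affineSpan ℝ (∑ i ∈ I, convexHull ℝ (V i : Set (Fin n → ℝ)))).direction ≤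
     Submodule.span ℝ (⋃ i ∈ I, (((V i ×ˢ V i).image (fun a => a.1 - a.2) : Finset (Fin n → ℝ)) : Set (Fin n → ℝ))) := by
  rw [direction_affineSpan, vectorSpan_def, Submodule.span_le]
  rintro _ ⟨z, hz, z', hz', rfl⟩
  rw [Set.mem_finsetSum] at hz hz'
  obtain ⟨g, hg, rfl⟩ := hz
  obtain ⟨g', hg', rfl⟩ := hz'
  simp only [vsub_eq_sub, ← Finset.sum_sub_distrib]
  apply Submodule.sum_mem
  intro i hi
  have h1 : g i -ᵥ g' i ∈ vectorSpan ℝ (V i : Set (Fin n → ℝ)) := by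
    rw [← direction_affineSpan, ← affineSpan_convexHull, direction_affineSpan]
    exact vsub_mem_vectorSpan ℝ (hg hi) (hg' hi)
  rw [vectorSpan_def] at h1
  refine Submodule.span_mono ?_ h1
  rintro _ ⟨v, hv, w, hw, rfl⟩
  simp only [Set.mem_iUnion]
  refine ⟨i, hi, ?_⟩
  simp only [Finset.coe_image, Set.mem_image]
  exact ⟨(v, w), by simpa using ⟨hv, hw⟩, rfl⟩

theorem BK.mem_dir {n : ℕ} (V : Fin n → Finset (Fin n → ℝ)) (hV : ∀ i, (V i).Nonempty)
    (I : Finset (Fin n)) (i : Fin n) (hi : i ∈ I) (v w : Fin n → ℝ) (hv : v ∈ V i) (hw : w ∈ V i) :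
    v - w ∈ (affineSpan ℝ (∑ i ∈ I, convexHull ℝ (V i : Set (Fin n → ℝ)))).direction := by
  choose g hg using hV
  have h : ∀ z ∈ V i, ∑ k ∈ I, (Function.update g i z) k ∈ ∑ i ∈ I, convexHull ℝ (V i : Set (Fin n → ℝ)) := by
    intro z hz
    apply Set.finsetSum_mem_finsetSum
    intro k _
    apply subset_convexHull
    by_cases hk : k = i
    · subst hk; simpa using hz
    · rw [Function.update_of_ne hk]; exact hg k
  rw [direction_affineSpan]
  have := vsub_mem_vectorSpan ℝ (h v hv) (h w hw)
  have e : ∑ k ∈ I, (Function.update g i v k - Function.update g i w k) = v - w := by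
    rw [Finset.sum_eq_single i]
    · simp
    · intro k _ hk; simp [Function.update_of_ne hk]
    · intro h; exact absurd hi h
  rwa [vsub_eq_sub, ← Finset.sum_sub_distrib, e] at this

theorem BK.transversal {n : ℕ} (V : Fin n → Finset (Fin n → ℝ))
    (h : ∀ I : Finset (Fin n), I.Nonempty → I.card ≤
      Module.finrank ℝ (affineSpan ℝ (∑ i ∈ I, convexHull ℝ (V i : Set (Fin n → ℝ)))).direction) :
    ∃ v w : Fin n → Fin n → ℝ, (∀ i, v i ∈ V i) ∧ (∀ i, w i ∈ V i) ∧
      (Matrix.of fun i => v i - w i).det ≠ 0 := by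
  classical
  obtain ⟨f, hf, hl⟩ := BK.rado _ (fun i => (V i ×ˢ V i).image (fun a => a.1 - a.2)) rfl (by
    intro I
    rcases I.eq_empty_or_nonempty with rfl | hI
    · simp
    · exact (h I hI).trans (Submodule.finrank_mono (BK.dir_le V I)))
  simp only [Finset.mem_image, Finset.mem_product] at hf
  choose a ha haf using hf
  refine ⟨fun i => (a i).1, fun i => (a i).2, fun i => (ha i).1, fun i => (ha i).2, ?_⟩
  have : (Matrix.of fun i => (a i).1 - (a i).2) = Matrix.of f := by
    ext i; simp [haf]
  rw [this]
  have h2 : IsUnit (Matrix.of f) := Matrix.linearIndependent_rows_iff_isUnit.1 hl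
  exact ((Matrix.isUnit_iff_isUnit_det _).1 h2).ne_zero

theorem BK.det_zero {n : ℕ} (V : Fin n → Finset (Fin n → ℝ)) (hV : ∀ i, (V i).Nonempty)
    (I : Finset (Fin n)) (h : Module.finrank ℝ (affineSpan ℝ (∑ i ∈ I, convexHull ℝ (V i : Set (Fin n → ℝ)))).direction < I.card)
    (v w : Fin n → Fin n → ℝ) (hv : ∀ i, v i ∈ V i) (hw : ∀ i, w i ∈ V i) :
      (Matrix.of fun i => v i - w i).det = 0 := by
  by_contra hd
  have h2 : IsUnit (Matrix.of fun i => v i - w i) := (Matrix.isUnit_iff_isUnit_det _).2 (isUnit_iff_ne_zero.2 hd)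
  have hl : LinearIndependent ℝ (fun i => v i - w i) := Matrix.linearIndependent_rows_iff_isUnit.2 h2
  set D := (affineSpan ℝ (∑ i ∈ I, convexHull ℝ (V i : Set (Fin n → ℝ)))).direction
  have h3 : LinearIndependent ℝ (fun i : I => (⟨v i - w i, BK.mem_dir V hV I i i.2 _ _ (hv i) (hw i)⟩ : D)) := by
    apply LinearIndependent.of_comp D.subtype
    exact hl.comp (fun i : I => (i : Fin n)) Subtype.val_injective
  have := h3.fintype_card_le_finrank
  simp at this
  omega

noncomputable def BK.ip {n : ℕ} (v : Fin n → ℝ) : (Fin n → ℝ) →L[ℝ] ℝ :=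
  ∑ i, v i • ContinuousLinearMap.proj i

theorem BK.ip_apply {n : ℕ} (v x : Fin n → ℝ) : BK.ip v x = v ⬝ᵥ x := by
  simp [BK.ip, dotProduct]

noncomputable def BK.Z {n : ℕ} (V : Finset (Fin n → ℝ)) (c : (Fin n → ℝ) → ℝ) (x : Fin n → ℝ) : ℝ :=
  ∑ v ∈ V, c v * Real.exp (v ⬝ᵥ x)

noncomputable def BK.p {n : ℕ} (V : Finset (Fin n → ℝ)) (c : (Fin n → ℝ) → ℝ) (v x : Fin n → ℝ) : ℝ :=
  c v * Real.exp (v ⬝ᵥ x - Real.log (BK.Z V c x))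

noncomputable def BK.m {n : ℕ} (V : Finset (Fin n → ℝ)) (c : (Fin n → ℝ) → ℝ) (x : Fin n → ℝ) : Fin n → ℝ :=
  ∑ v ∈ V, BK.p V c v x • v

noncomputable def BK.q {n : ℕ} (V : Finset (Fin n → ℝ)) (c : (Fin n → ℝ) → ℝ)
    (θ : (Fin n → ℝ) × (Fin n → ℝ) → ℝ) (x : Fin n → ℝ) (a : (Fin n → ℝ) × (Fin n → ℝ)) : ℝ :=
  θ a * (BK.p V c a.1 x * BK.p V c a.2 x)

noncomputable def BK.C {n : ℕ} (V : Finset (Fin n → ℝ)) (c : (Fin n → ℝ) → ℝ)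
    (θ : (Fin n → ℝ) × (Fin n → ℝ) → ℝ) (x : Fin n → ℝ) : Matrix (Fin n) (Fin n) ℝ :=
  ∑ a ∈ V ×ˢ V, BK.q V c θ x a • Matrix.vecMulVec (a.1 - a.2) (a.1 - a.2)

theorem BK.Z_pos {n : ℕ} {V : Finset (Fin n → ℝ)} {c : (Fin n → ℝ) → ℝ} (hV : V.Nonempty)
    (hc : ∀ v, 0 < c v) (x : Fin n → ℝ) : 0 < BK.Z V c x :=
  Finset.sum_pos (fun v _ => mul_pos (hc v) (Real.exp_pos _)) hV

theorem BK.p_pos {n : ℕ} {V : Finset (Fin n → ℝ)} {c : (Fin n → ℝ) → ℝ}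
    (hc : ∀ v, 0 < c v) (v x : Fin n → ℝ) : 0 < BK.p V c v x :=
  mul_pos (hc v) (Real.exp_pos _)

theorem BK.p_eq {n : ℕ} {V : Finset (Fin n → ℝ)} {c : (Fin n → ℝ) → ℝ} {x : Fin n → ℝ}
    (hZ : 0 < BK.Z V c x) (v : Fin n → ℝ) :
    BK.p V c v x = (BK.Z V c x)⁻¹ * (c v * Real.exp (v ⬝ᵥ x)) := by
  rw [BK.p, Real.exp_sub, Real.exp_log hZ]; ring

theorem BK.p_sum {n : ℕ} {V : Finset (Fin n → ℝ)} {c : (Fin n → ℝ) → ℝ} {x : Fin n → ℝ}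
    (hZ : 0 < BK.Z V c x) : ∑ v ∈ V, BK.p V c v x = 1 := by
  simp only [BK.p_eq hZ, ← Finset.mul_sum]
  exact inv_mul_cancel₀ hZ.ne'

theorem BK.hasFDerivAt_logZ {n : ℕ} {V : Finset (Fin n → ℝ)} {c : (Fin n → ℝ) → ℝ} (hV : V.Nonempty)
    (hc : ∀ v, 0 < c v) (x : Fin n → ℝ) :
    HasFDerivAt (fun x => Real.log (BK.Z V c x)) (BK.ip (BK.m V c x)) x := by
  have hZ := BK.Z_pos hV hc x
  have h1 : HasFDerivAt (BK.Z V c) (∑ v ∈ V, c v • (Real.exp (v ⬝ᵥ x) • BK.ip v)) x := by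
    unfold BK.Z
    apply HasFDerivAt.fun_sum
    intro v _
    apply HasFDerivAt.const_mul
    have := (BK.ip v).hasFDerivAt (x := x)
    simp only [show ⇑(BK.ip v) = fun y => v ⬝ᵥ y from funext (BK.ip_apply v)] at this
    exact this.exp
  have h2 := h1.log hZ.ne'
  refine h2.congr_fderiv ?_
  ext1 h
  rw [BK.ip_apply, smul_apply, _root_.sum_apply]
  simp only [BK.m, sum_dotProduct, smul_apply, BK.ip_apply,
    smul_dotProduct, BK.p_eq hZ, Finset.mul_sum, smul_eq_mul, mul_assoc]

theorem BK.hasFDerivAt_p {n : ℕ} {V : Finset (Fin n → ℝ)} {c : (Fin n → ℝ) → ℝ} (hV : V.Nonempty)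
    (hc : ∀ v, 0 < c v) (v x : Fin n → ℝ) :
    HasFDerivAt (fun x => BK.p V c v x) (BK.p V c v x • (BK.ip v - BK.ip (BK.m V c x))) x := by
  have := (BK.ip v).hasFDerivAt (x := x)
  simp only [show ⇑(BK.ip v) = fun y => v ⬝ᵥ y from funext (BK.ip_apply v)] at this
  have h := ((this.sub (BK.hasFDerivAt_logZ hV hc x)).exp).const_mul (c v)
  rw [smul_smul] at h
  exact h

theorem BK.cov {α : Type*} (V : Finset α) (p a b : α → ℝ) (θ : α × α → ℝ) (hp : ∑ v ∈ V, p v = 1)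
    (hθ : ∀ v w, v ≠ w → θ (v, w) + θ (w, v) = 1) :
    ∑ v ∈ V, p v * (a v - ∑ w ∈ V, p w * a w) * b v =
    ∑ v ∈ V ×ˢ V, θ v * (p v.1 * p v.2) * ((a v.1 - a v.2) * (b v.1 - b v.2)) := by
  have h1 : ∑ v ∈ V ×ˢ V, θ v * (p v.1 * p v.2) * ((a v.1 - a v.2) * (b v.1 - b v.2))
     = ∑ v ∈ V, ∑ w ∈ V, θ (v, w) * (p v * p w) * ((a v - a w) * (b v - b w)) := Finset.sum_product _ _ _
  have h2 : ∑ v ∈ V, ∑ w ∈ V, θ (v, w) * (p v * p w) * ((a v - a w) * (b v - b w))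
     = ∑ v ∈ V, ∑ w ∈ V, θ (w, v) * (p v * p w) * ((a v - a w) * (b v - b w)) := by
    rw [Finset.sum_comm]
    refine Finset.sum_congr rfl fun v _ => Finset.sum_congr rfl fun w _ => by ring
  have h3 : 2 * ∑ v ∈ V, ∑ w ∈ V, θ (v, w) * (p v * p w) * ((a v - a w) * (b v - b w))
     = ∑ v ∈ V, ∑ w ∈ V, (p v * p w) * ((a v - a w) * (b v - b w)) := by
    rw [two_mul]
    nth_rewrite 2 [h2]
    simp only [← Finset.sum_add_distrib]
    refine Finset.sum_congr rfl fun v _ => Finset.sum_congr rfl fun w _ => ?_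
    by_cases h : v = w
    · subst h; simp
    · rw [← add_mul, ← add_mul, hθ v w h, one_mul]
  have h4 : ∑ v ∈ V, ∑ w ∈ V, (p v * p w) * ((a v - a w) * (b v - b w))
     = ∑ v ∈ V, ∑ w ∈ V, ((p v * a v * b v) * p w + p v * (p w * a w * b w)
         - (p v * a v) * (p w * b w) - (p v * b v) * (p w * a w)) := by
    refine Finset.sum_congr rfl fun v _ => Finset.sum_congr rfl fun w _ => by ring
  simp only [Finset.sum_add_distrib, Finset.sum_sub_distrib, ← Finset.mul_sum, ← Finset.sum_mul, hp] at h4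
  rw [h1]
  have h5 : ∑ v ∈ V, p v * (a v - ∑ w ∈ V, p w * a w) * b v
     = ∑ v ∈ V, p v * a v * b v - (∑ w ∈ V, p w * a w) * ∑ v ∈ V, p v * b v := by
    rw [Finset.mul_sum, ← Finset.sum_sub_distrib]
    refine Finset.sum_congr rfl fun v _ => by ring
  rw [h5]
  linarith

theorem BK.hasFDerivAt_m {n : ℕ} {V : Finset (Fin n → ℝ)} {c : (Fin n → ℝ) → ℝ} (hV : V.Nonempty)
    (hc : ∀ v, 0 < c v) (θ : (Fin n → ℝ) × (Fin n → ℝ) → ℝ)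
    (hθ : ∀ v w, v ≠ w → θ (v, w) + θ (w, v) = 1) (x : Fin n → ℝ) :
    HasFDerivAt (BK.m V c) (Matrix.toLin' (BK.C V c θ x)).toContinuousLinearMap x := by
  have h1 : HasFDerivAt (BK.m V c)
      (∑ v ∈ V, (BK.p V c v x • (BK.ip v - BK.ip (BK.m V c x))).smulRight v) x := by
    unfold BK.m
    apply HasFDerivAt.fun_sum
    intro v _
    exact (BK.hasFDerivAt_p hV hc v x).smul_const v
  refine h1.congr_fderiv ?_
  ext1 h
  ext k
  have := BK.cov V (fun v => BK.p V c v x) (fun v => v ⬝ᵥ h) (fun v => v k) θ (BK.p_sum (BK.Z_pos hV hc x)) hθ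
  simp only [_root_.sum_apply, Finset.sum_apply, ContinuousLinearMap.smulRight_apply,
    smul_apply, sub_apply, BK.ip_apply, Pi.smul_apply, smul_eq_mul,
    LinearMap.coe_toContinuousLinearMap', Matrix.toLin'_apply, BK.m, sum_dotProduct, smul_dotProduct] at this ⊢
  rw [this]
  simp only [BK.C, Matrix.sum_mulVec, Finset.sum_apply, Matrix.smul_mulVec, Pi.smul_apply, Matrix.vecMulVec_mulVec]
  refine Finset.sum_congr rfl fun a _ => ?_
  simp [BK.q, sub_dotProduct]
  left; ring

theorem BK.m_mem {n : ℕ} {V : Finset (Fin n → ℝ)} {c : (Fin n → ℝ) → ℝ} (hV : V.Nonempty)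
    (hc : ∀ v, 0 < c v) (x : Fin n → ℝ) : BK.m V c x ∈ convexHull ℝ (V : Set (Fin n → ℝ)) := by
  apply (convex_convexHull ℝ _).sum_mem
  · intro v _; exact (BK.p_pos hc v x).le
  · exact BK.p_sum (BK.Z_pos hV hc x)
  · intro v hv; exact subset_convexHull ℝ _ hv

theorem BK.quad {n : ℕ} (V : Finset (Fin n → ℝ)) (c : (Fin n → ℝ) → ℝ)
    (θ : (Fin n → ℝ) × (Fin n → ℝ) → ℝ) (x h : Fin n → ℝ) :
    h ⬝ᵥ (BK.C V c θ x).mulVec h = ∑ a ∈ V ×ˢ V, BK.q V c θ x a * ((a.1 - a.2) ⬝ᵥ h) ^ 2 := by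
  simp only [BK.C, Matrix.sum_mulVec, Matrix.smul_mulVec, Matrix.vecMulVec_mulVec, dotProduct_sum]
  refine Finset.sum_congr rfl fun a _ => ?_
  simp [dotProduct_comm h]
  left; ring

theorem BK.C_posSemidef {n : ℕ} (V : Finset (Fin n → ℝ)) (c : (Fin n → ℝ) → ℝ) (hc : ∀ v, 0 < c v)
    (θ : (Fin n → ℝ) × (Fin n → ℝ) → ℝ) (hθ : ∀ a, 0 ≤ θ a) (x : Fin n → ℝ) :
    (BK.C V c θ x).PosSemidef := by
  apply Matrix.posSemidef_sum
  intro a _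
  apply Matrix.PosSemidef.smul
  · have := Matrix.posSemidef_vecMulVec_self_star (R := ℝ) (a.1 - a.2)
    simpa using this
  · exact mul_nonneg (hθ a) (mul_nonneg (BK.p_pos hc _ x).le (BK.p_pos hc _ x).le)

theorem BK.continuous_C {n : ℕ} {V : Finset (Fin n → ℝ)} {c : (Fin n → ℝ) → ℝ} (hV : V.Nonempty)
    (hc : ∀ v, 0 < c v) (θ : (Fin n → ℝ) × (Fin n → ℝ) → ℝ) : Continuous (BK.C V c θ) := by
  have : ∀ v, Continuous (BK.p V c v) := fun v =>
    continuous_iff_continuousAt.2 fun x => (BK.hasFDerivAt_p hV hc v x).continuousAt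
  unfold BK.C BK.q
  fun_prop

noncomputable def BK.G {n : ℕ} (V : Fin n → Finset (Fin n → ℝ)) (c : Fin n → (Fin n → ℝ) → ℝ)
    (J : Finset (Fin n)) (x : Fin n → ℝ) : Fin n → ℝ := ∑ i ∈ J, BK.m (V i) (c i) x

noncomputable def BK.H {n : ℕ} (V : Fin n → Finset (Fin n → ℝ)) (c : Fin n → (Fin n → ℝ) → ℝ)
    (θ : Fin n → (Fin n → ℝ) × (Fin n → ℝ) → ℝ)
    (J : Finset (Fin n)) (x : Fin n → ℝ) : Matrix (Fin n) (Fin n) ℝ := ∑ i ∈ J, BK.C (V i) (c i) (θ i) x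

theorem BK.hasFDerivAt_G {n : ℕ} {V : Fin n → Finset (Fin n → ℝ)} {c : Fin n → (Fin n → ℝ) → ℝ}
    {θ : Fin n → (Fin n → ℝ) × (Fin n → ℝ) → ℝ}
    (hV : ∀ i, (V i).Nonempty) (hc : ∀ i v, 0 < c i v)
    (hθ : ∀ i v w, v ≠ w → θ i (v, w) + θ i (w, v) = 1)
    (J : Finset (Fin n)) (x : Fin n → ℝ) :
    HasFDerivAt (BK.G V c J) (Matrix.toLin' (BK.H V c θ J x)).toContinuousLinearMap x := by
  have : HasFDerivAt (BK.G V c J) (∑ i ∈ J, (Matrix.toLin' (BK.C (V i) (c i) (θ i) x)).toContinuousLinearMap) x := by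
    unfold BK.G
    apply HasFDerivAt.fun_sum
    intro i _
    exact BK.hasFDerivAt_m (hV i) (hc i) (θ i) (hθ i) x
  refine this.congr_fderiv ?_
  simp [BK.H]

theorem BK.surj {n : ℕ} {V : Fin n → Finset (Fin n → ℝ)} {c : Fin n → (Fin n → ℝ) → ℝ}
    (hV : ∀ i, (V i).Nonempty) (hc : ∀ i v, 0 < c i v)
    (J : Finset (Fin n)) (y : Fin n → ℝ)
    (hy : y ∈ interior (∑ i ∈ J, convexHull ℝ (V i : Set (Fin n → ℝ)))) :
    ∃ x, BK.G V c J x = y := by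
  have hK : ∀ i, ∃ K : ℝ, ∀ v ∈ V i, -Real.log (c i v) ≤ K := by
    intro i
    obtain ⟨K, hK⟩ := ((V i).image (fun v => -Real.log (c i v))).bddAbove
    exact ⟨K, fun v hv => hK (by simpa using ⟨v, hv, rfl⟩)⟩
  choose K hK using hK
  -- bound of linear functional by log Z
  have hb : ∀ i x, ∀ z ∈ convexHull ℝ (V i : Set (Fin n → ℝ)), z ⬝ᵥ x ≤ Real.log (BK.Z (V i) (c i) x) + K i := by
    intro i x z hz
    have hsub : convexHull ℝ (V i : Set (Fin n → ℝ)) ⊆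
        {z | BK.ip x z ≤ Real.log (BK.Z (V i) (c i) x) + K i} := by
      apply convexHull_min
      · intro v hv
        have h1 : c i v * Real.exp (v ⬝ᵥ x) ≤ BK.Z (V i) (c i) x :=
          Finset.single_le_sum (f := fun v => c i v * Real.exp (v ⬝ᵥ x))
            (fun w _ => (mul_pos (hc i w) (Real.exp_pos _)).le) hv
        have h2 := Real.log_le_log (mul_pos (hc i v) (Real.exp_pos _)) h1
        rw [Real.log_mul (hc i v).ne' (Real.exp_pos _).ne', Real.log_exp] at h2
        have h3 := hK i v hv
        simp only [Set.mem_ofPred_eq, BK.ip_apply, dotProduct_comm x]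
        linarith
      · exact convex_halfSpace_le (BK.ip x).toLinearMap.isLinear _
    have := hsub hz
    simpa only [Set.mem_ofPred_eq, BK.ip_apply, dotProduct_comm x] using this
  let f : (Fin n → ℝ) → ℝ := fun x => ∑ i ∈ J, Real.log (BK.Z (V i) (c i) x) - BK.ip y x
  have hf : ∀ x, HasFDerivAt f (∑ i ∈ J, BK.ip (BK.m (V i) (c i) x) - BK.ip y) x := by
    intro x
    apply HasFDerivAt.fun_sub
    · apply HasFDerivAt.fun_sum
      intro i _
      exact BK.hasFDerivAt_logZ (hV i) (hc i) x
    · exact (BK.ip y).hasFDerivAt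
  rw [mem_interior_iff_mem_nhds, Metric.mem_nhds_iff] at hy
  obtain ⟨ε, hε, hball⟩ := hy
  have hlow : ∀ x, (ε / 2) * ‖x‖ - ∑ i ∈ J, K i ≤ f x := by
    intro x
    let z : Fin n → ℝ := y + (ε / 2) • fun j => ((SignType.sign (x j) : SignType) : ℝ)
    have hz : z ∈ ∑ i ∈ J, convexHull ℝ (V i : Set (Fin n → ℝ)) := by
      apply hball
      rw [Metric.mem_ball, dist_eq_norm]
      have : ‖z - y‖ ≤ ε / 2 := by
        rw [pi_norm_le_iff_of_nonneg (by positivity)]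
        intro j
        simp only [z, add_sub_cancel_left, Pi.smul_apply, smul_eq_mul, norm_mul, Real.norm_eq_abs]
        rw [abs_of_pos (by positivity : 0 < ε / 2)]
        have : |((SignType.sign (x j) : SignType) : ℝ)| ≤ 1 := by
          rcases lt_trichotomy (x j) 0 with h | h | h <;> simp [h]
        nlinarith
      linarith
    rw [Set.mem_finsetSum] at hz
    obtain ⟨g, hg, hgz⟩ := hz
    have h1 : z ⬝ᵥ x ≤ ∑ i ∈ J, (Real.log (BK.Z (V i) (c i) x) + K i) := by
      rw [← hgz, sum_dotProduct]
      exact Finset.sum_le_sum fun i hi => hb i x _ (hg hi)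
    have h2 : z ⬝ᵥ x = y ⬝ᵥ x + (ε / 2) * ∑ j, |x j| := by
      simp only [z, add_dotProduct, smul_dotProduct, smul_eq_mul]
      congr 2
      simp only [dotProduct]
      exact Finset.sum_congr rfl fun j _ => by rw [sign_mul_self]
    have h3 : ‖x‖ ≤ ∑ j, |x j| := by
      rw [pi_norm_le_iff_of_nonneg (Finset.sum_nonneg fun _ _ => abs_nonneg _)]
      intro j
      exact Finset.single_le_sum (f := fun j => |x j|) (fun _ _ => abs_nonneg _) (Finset.mem_univ j)
    have h4 : (ε / 2) * ‖x‖ ≤ (ε / 2) * ∑ j, |x j| := by gcongr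
    simp only [f, BK.ip_apply]
    rw [Finset.sum_add_distrib] at h1
    linarith
  have htend : Filter.Tendsto f (Filter.cocompact _) Filter.atTop := by
    apply Filter.tendsto_atTop_mono hlow
    apply Filter.tendsto_atTop_add_const_right
    exact Filter.Tendsto.const_mul_atTop (by positivity) (tendsto_norm_cocompact_atTop)
  have hcont : Continuous f := continuous_iff_continuousAt.2 fun x => (hf x).continuousAt
  obtain ⟨x, hx⟩ := hcont.exists_forall_le htend
  refine ⟨x, ?_⟩
  have h0 := IsLocalMin.hasFDerivAt_eq_zero (Filter.Eventually.of_forall hx : IsLocalMin f x) (hf x)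
  ext k
  have h1 := congrArg (fun L : (Fin n → ℝ) →L[ℝ] ℝ => L (Pi.single k 1)) h0
  simp [BK.ip_apply] at h1
  simp only [BK.G, Finset.sum_apply]
  linarith

theorem BK.inj {n : ℕ} {V : Fin n → Finset (Fin n → ℝ)} {c : Fin n → (Fin n → ℝ) → ℝ}
    (hV : ∀ i, (V i).Nonempty) (hc : ∀ i v, 0 < c i v)
    (J : Finset (Fin n))
    (hJ : ∀ h : Fin n → ℝ, h ≠ 0 → ∃ i ∈ J, ∃ v ∈ V i, ∃ w ∈ V i, (v - w) ⬝ᵥ h ≠ 0) :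
    Function.Injective (BK.G V c J) := by
  intro x y hxy
  by_contra hne
  set h := x - y
  have hh : h ≠ 0 := sub_ne_zero.2 hne
  let φ : ℝ → ℝ := fun t => BK.ip h (BK.G V c J (y + t • h))
  have hφ : ∀ t, HasDerivAt φ (h ⬝ᵥ (BK.H V c (fun _ _ => 1/2) J (y + t • h)).mulVec h) t := by
    intro t
    have h1 : HasDerivAt (fun t : ℝ => y + t • h) h t := by
      simpa using ((hasDerivAt_id t).smul_const h).const_add y
    have h2 := (BK.hasFDerivAt_G hV hc (θ := fun _ _ => 1/2) (by intros; norm_num) J (y + t • h)).comp_hasDerivAt t h1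
    have h3 := (BK.ip h).hasFDerivAt.comp_hasDerivAt t h2
    have e : BK.ip h ((Matrix.toLin' (BK.H V c (fun _ _ => 1/2) J (y + t • h))).toContinuousLinearMap h)
        = h ⬝ᵥ (BK.H V c (fun _ _ => 1/2) J (y + t • h)).mulVec h := by
      simp [BK.ip_apply]
    rw [← e]
    exact h3
  have hpos : ∀ t, 0 < deriv φ t := by
    intro t
    rw [(hφ t).deriv, BK.H, Matrix.sum_mulVec, dotProduct_sum]
    have hq : ∀ i a, 0 < BK.q (V i) (c i) (fun _ => 1/2) (y + t • h) a := by
      intro i a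
      exact mul_pos (by norm_num) (mul_pos (BK.p_pos (hc i) _ _) (BK.p_pos (hc i) _ _))
    obtain ⟨i, hi, v, hv, w, hw, hvw⟩ := hJ h hh
    apply Finset.sum_pos'
    · intro i _
      rw [BK.quad]
      exact Finset.sum_nonneg fun a _ => mul_nonneg (hq i a).le (sq_nonneg _)
    · refine ⟨i, hi, ?_⟩
      rw [BK.quad]
      apply Finset.sum_pos'
      · exact fun a _ => mul_nonneg (hq i a).le (sq_nonneg _)
      · exact ⟨(v, w), Finset.mem_product.2 ⟨hv, hw⟩, mul_pos (hq i _) (by positivity)⟩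
  have hmono := strictMono_of_deriv_pos hpos
  have := hmono (zero_lt_one)
  simp only [φ, zero_smul, add_zero, one_smul, h, add_sub_cancel] at this
  rw [hxy] at this
  exact lt_irrefl _ this

theorem BK.H_det_nonneg {n : ℕ} {V : Fin n → Finset (Fin n → ℝ)} {c : Fin n → (Fin n → ℝ) → ℝ}
    {θ : Fin n → (Fin n → ℝ) × (Fin n → ℝ) → ℝ}
    (hc : ∀ i v, 0 < c i v) (hθ0 : ∀ i a, 0 ≤ θ i a) (J : Finset (Fin n)) (x : Fin n → ℝ) :
    0 ≤ (BK.H V c θ J x).det :=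
  (Matrix.posSemidef_sum _ fun i _ => BK.C_posSemidef _ _ (hc i) _ (hθ0 i) x).det_nonneg

theorem BK.vol_eq {n : ℕ} {V : Fin n → Finset (Fin n → ℝ)} {c : Fin n → (Fin n → ℝ) → ℝ}
    {θ : Fin n → (Fin n → ℝ) × (Fin n → ℝ) → ℝ}
    (hV : ∀ i, (V i).Nonempty) (hc : ∀ i v, 0 < c i v)
    (hθ0 : ∀ i a, 0 ≤ θ i a)
    (hθ : ∀ i v w, v ≠ w → θ i (v, w) + θ i (w, v) = 1)
    (J : Finset (Fin n)) :
    volume (∑ i ∈ J, convexHull ℝ (V i : Set (Fin n → ℝ))) =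
      ∫⁻ x, ENNReal.ofReal (BK.H V c θ J x).det := by
  by_cases hJ : ∀ h : Fin n → ℝ, h ≠ 0 → ∃ i ∈ J, ∃ v ∈ V i, ∃ w ∈ V i, (v - w) ⬝ᵥ h ≠ 0
  · have h1 := lintegral_abs_det_fderiv_eq_addHaar_image volume (MeasurableSet.univ)
      (fun x _ => (BK.hasFDerivAt_G hV hc hθ J x).hasFDerivWithinAt) (BK.inj hV hc J hJ).injOn
    have h2 : volume (∑ i ∈ J, convexHull ℝ (V i : Set (Fin n → ℝ))) = volume (BK.G V c J '' Set.univ) := by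
      apply le_antisymm
      · have hfr : volume (frontier (∑ i ∈ J, convexHull ℝ (V i : Set (Fin n → ℝ)))) = 0 :=
          Convex.addHaar_frontier _ (convex_sum _ fun i _ => convex_convexHull ℝ _)
        rw [← measure_interior_of_null_frontier hfr]
        apply measure_mono
        intro y hy
        obtain ⟨x, hx⟩ := BK.surj hV hc J y hy
        exact ⟨x, trivial, hx⟩
      · apply measure_mono
        rintro _ ⟨x, _, rfl⟩
        exact Set.finsetSum_mem_finsetSum _ _ _ fun i _ => BK.m_mem (hV i) (hc i) x
    rw [h2, ← h1, Measure.restrict_univ]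
    apply lintegral_congr
    intro x
    congr 1
    rw [ContinuousLinearMap.det, LinearMap.coe_toContinuousLinearMap, LinearMap.det_toLin',
      abs_of_nonneg (BK.H_det_nonneg hc hθ0 J x)]
  · push Not at hJ
    obtain ⟨h, hh, hJ⟩ := hJ
    have hdet : ∀ x, (BK.H V c θ J x).det = 0 := by
      intro x
      rw [← Matrix.exists_mulVec_eq_zero_iff]
      refine ⟨h, hh, ?_⟩
      rw [BK.H, Matrix.sum_mulVec]
      apply Finset.sum_eq_zero
      intro i hi
      rw [BK.C, Matrix.sum_mulVec]
      apply Finset.sum_eq_zero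
      intro a ha
      rw [Finset.mem_product] at ha
      rw [Matrix.smul_mulVec, Matrix.vecMulVec_mulVec, hJ i hi _ ha.1 _ ha.2]
      simp
    simp only [hdet, ENNReal.ofReal_zero, lintegral_zero]
    choose g hg using hV
    let s : AffineSubspace ℝ (Fin n → ℝ) := AffineSubspace.mk' (∑ i ∈ J, g i) (LinearMap.ker (BK.ip h).toLinearMap)
    have hs : s ≠ ⊤ := by
      intro hs
      have h1 : s.direction = ⊤ := by rw [hs]; exact AffineSubspace.direction_top _ _ _
      rw [AffineSubspace.direction_mk'] at h1
      have h2 : h ∈ LinearMap.ker (BK.ip h).toLinearMap := by rw [h1]; trivial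
      rw [LinearMap.mem_ker] at h2
      change BK.ip h h = 0 at h2
      rw [BK.ip_apply] at h2
      exact hh (dotProduct_self_eq_zero.1 h2)
    apply measure_mono_null _ (Measure.addHaar_affineSubspace volume s hs)
    intro z hz
    rw [Set.mem_finsetSum] at hz
    obtain ⟨f, hf, rfl⟩ := hz
    rw [SetLike.mem_coe, AffineSubspace.mem_mk', LinearMap.mem_ker, vsub_eq_sub, ← Finset.sum_sub_distrib, map_sum]
    apply Finset.sum_eq_zero
    intro i hi
    have hsub : convexHull ℝ (V i : Set (Fin n → ℝ)) ⊆ {z | BK.ip h z = BK.ip h (g i)} := by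
      apply convexHull_min
      · intro v hv
        have := hJ i hi v hv (g i) (hg i)
        rw [sub_dotProduct] at this
        simp only [Set.mem_ofPred_eq, BK.ip_apply, dotProduct_comm h]
        linarith
      · exact convex_hyperplane (BK.ip h).toLinearMap.isLinear _
    have := hsub (hf hi)
    rw [map_sub, sub_eq_zero]
    exact this

theorem BK.mv_eq {n : ℕ} {V : Fin n → Finset (Fin n → ℝ)} {c : Fin n → (Fin n → ℝ) → ℝ}
    {θ : Fin n → (Fin n → ℝ) × (Fin n → ℝ) → ℝ}
    (hV : ∀ i, (V i).Nonempty) (hc : ∀ i v, 0 < c i v)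
    (hθ0 : ∀ i a, 0 ≤ θ i a)
    (hθ : ∀ i v w, v ≠ w → θ i (v, w) + θ i (w, v) = 1) :
    Integrable (fun x => ∑ b ∈ Fintype.piFinset (fun i => V i ×ˢ V i),
      (∏ i, BK.q (V i) (c i) (θ i) x (b i)) * (Matrix.of fun i => (b i).1 - (b i).2).det ^ 2) ∧
    mixedVol (fun i => convexHull ℝ (V i : Set (Fin n → ℝ))) =
      ∫ x, ∑ b ∈ Fintype.piFinset (fun i => V i ×ˢ V i),
      (∏ i, BK.q (V i) (c i) (θ i) x (b i)) * (Matrix.of fun i => (b i).1 - (b i).2).det ^ 2 := by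
  have key : ∀ x, ∑ J : Finset (Fin n), (-1 : ℝ) ^ (n - J.card) * (BK.H V c θ J x).det =
    ∑ b ∈ Fintype.piFinset (fun i => V i ×ˢ V i),
      (∏ i, BK.q (V i) (c i) (θ i) x (b i)) * (Matrix.of fun i => (b i).1 - (b i).2).det ^ 2 := by
    intro x
    exact BK.mixed_disc (fun i => V i ×ˢ V i) (fun i => BK.q (V i) (c i) (θ i) x) (fun a => a.1 - a.2)
  simp only [← key]
  have hcont : ∀ J, Continuous fun x => (BK.H V c θ J x).det := by
    intro J
    apply Continuous.matrix_det
    exact continuous_finsetSum _ fun i _ => BK.continuous_C (hV i) (hc i) (θ i)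
  have hJint : ∀ J, Integrable fun x => (BK.H V c θ J x).det := by
    intro J
    refine ⟨(hcont J).aestronglyMeasurable, ?_⟩
    rw [hasFiniteIntegral_iff_ofReal (Filter.Eventually.of_forall fun x => BK.H_det_nonneg hc hθ0 J x),
      ← BK.vol_eq hV hc hθ0 hθ J]
    have : IsCompact (∑ i ∈ J, convexHull ℝ (V i : Set (Fin n → ℝ))) := by
      refine Finset.sum_induction _ IsCompact (fun _ _ h1 h2 => h1.add h2) isCompact_singleton ?_
      intro i _
      exact (V i).finite_toSet.isCompact_convexHull ℝ
    exact this.measure_lt_top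
  refine ⟨integrable_finsetSum _ fun J _ => (hJint J).const_mul _, ?_⟩
  rw [integral_finsetSum _ fun J _ => (hJint J).const_mul _]
  unfold mixedVol
  refine Finset.sum_congr rfl fun J _ => ?_
  rw [integral_const_mul, BK.vol_eq hV hc hθ0 hθ J,
    integral_eq_lintegral_of_nonneg_ae (Filter.Eventually.of_forall fun x => BK.H_det_nonneg hc hθ0 J x) (hcont J).aestronglyMeasurable]

theorem BK.sigmoid_integral {n : ℕ} (U : Matrix (Fin n) (Fin n) ℝ) (hU : U.det ≠ 0) :
    ∫⁻ x : Fin n → ℝ, ENNReal.ofReal ((∏ i, (Real.sigmoid (U.mulVec x i) * (1 - Real.sigmoid (U.mulVec x i)))) * |U.det|) = 1 := by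
  let F : (Fin n → ℝ) → (Fin n → ℝ) := fun x i => Real.sigmoid (U.mulVec x i)
  let s : (Fin n → ℝ) → Fin n → ℝ := fun x i => Real.sigmoid (U.mulVec x i) * (1 - Real.sigmoid (U.mulVec x i))
  let D : (Fin n → ℝ) → Matrix (Fin n) (Fin n) ℝ := fun x => Matrix.of fun i j => s x i * U i j
  have hF : ∀ x, HasFDerivAt F (Matrix.toLin' (D x)).toContinuousLinearMap x := by
    intro x
    rw [hasFDerivAt_pi']
    intro i
    have h1 : HasFDerivAt (fun x => U.mulVec x i) (BK.ip (U i)) x := by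
      have := (BK.ip (U i)).hasFDerivAt (x := x)
      simp only [show ⇑(BK.ip (U i)) = fun y => U i ⬝ᵥ y from funext (BK.ip_apply _)] at this
      exact this
    have h2 := (Real.hasDerivAt_sigmoid (U.mulVec x i)).comp_hasFDerivAt x h1
    refine h2.congr_fderiv ?_
    ext1 h
    simp [BK.ip_apply, D, s, Matrix.mulVec, dotProduct, Finset.mul_sum, mul_assoc]
  have hUu : IsUnit U := (Matrix.isUnit_iff_isUnit_det _).2 (isUnit_iff_ne_zero.2 hU)
  have hinj : Function.Injective F := by
    intro x y hxy
    apply Matrix.mulVec_injective_of_isUnit hUu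
    ext i
    exact Real.sigmoid_injective (congrFun hxy i)
  have himg : F '' Set.univ = Set.pi Set.univ (fun _ => Set.Ioo (0:ℝ) 1) := by
    ext y
    constructor
    · rintro ⟨x, _, rfl⟩ i _
      exact ⟨Real.sigmoid_pos _, Real.sigmoid_lt_one _⟩
    · intro hy
      have : ∀ i, ∃ t, Real.sigmoid t = y i := fun i => by
        have := hy i trivial
        rw [← Real.range_sigmoid] at this
        exact this
      choose t ht using this
      obtain ⟨x, hx⟩ := (Matrix.mulVec_surjective_iff_isUnit.2 hUu) t
      refine ⟨x, trivial, ?_⟩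
      ext i
      simp only [F, hx, ht]
  have h1 := lintegral_abs_det_fderiv_eq_addHaar_image volume (MeasurableSet.univ)
      (fun x _ => (hF x).hasFDerivWithinAt) hinj.injOn
  rw [himg, Real.volume_pi_Ioo, Measure.restrict_univ] at h1
  simp only [sub_zero, ENNReal.ofReal_one, Finset.prod_const_one] at h1
  rw [← h1]
  apply lintegral_congr
  intro x
  congr 1
  rw [ContinuousLinearMap.det, LinearMap.coe_toContinuousLinearMap, LinearMap.det_toLin', Matrix.det_mul_column,
    abs_mul, abs_of_nonneg (a := ∏ i, s x i)
      (Finset.prod_nonneg fun i _ => mul_nonneg (Real.sigmoid_nonneg _) (sub_nonneg.2 (Real.sigmoid_le_one _)))]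

noncomputable def BK.cs {n : ℕ} (v w : Fin n → ℝ) (k : ℕ) (z : Fin n → ℝ) : ℝ :=
  open Classical in if z = v ∨ z = w then 1 else 1 / ((k : ℝ) + 1)

noncomputable def BK.th {n : ℕ} (v w : Fin n → ℝ) (a : (Fin n → ℝ) × (Fin n → ℝ)) : ℝ :=
  open Classical in if a = (v, w) then 1 else if a = (w, v) then 0 else 1 / 2

theorem BK.cs_pos {n : ℕ} (v w : Fin n → ℝ) (k : ℕ) (z : Fin n → ℝ) : 0 < BK.cs v w k z := by
  unfold BK.cs; split_ifs <;> positivity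

theorem BK.th_nonneg {n : ℕ} (v w : Fin n → ℝ) (a : (Fin n → ℝ) × (Fin n → ℝ)) : 0 ≤ BK.th v w a := by
  unfold BK.th; split_ifs <;> positivity

theorem BK.th_add {n : ℕ} (v w : Fin n → ℝ) (hvw : v ≠ w) (a b : Fin n → ℝ) :
    BK.th v w (a, b) + BK.th v w (b, a) = 1 := by
  unfold BK.th
  simp only [Prod.mk.injEq]
  by_cases h1 : a = v ∧ b = w
  · obtain ⟨rfl, rfl⟩ := h1
    simp [hvw]
  · by_cases h2 : a = w ∧ b = v
    · obtain ⟨rfl, rfl⟩ := h2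
      simp [hvw.symm]
    · have h3 : ¬ (b = v ∧ a = w) := fun h => h2 h.symm
      have h4 : ¬ (b = w ∧ a = v) := fun h => h1 h.symm
      simp only [h1, h2, h3, h4, if_false]
      norm_num

theorem BK.tendsto_q {n : ℕ} (V : Finset (Fin n → ℝ)) (v w : Fin n → ℝ) (hv : v ∈ V) (hw : w ∈ V)
    (hvw : v ≠ w) (x : Fin n → ℝ) :
    Filter.Tendsto (fun k => BK.q V (BK.cs v w k) (BK.th v w) x (v, w)) Filter.atTop
      (nhds (Real.sigmoid ((v - w) ⬝ᵥ x) * (1 - Real.sigmoid ((v - w) ⬝ᵥ x)))) := by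
  classical
  have hZ : Filter.Tendsto (fun k => BK.Z V (BK.cs v w k) x) Filter.atTop
      (nhds (Real.exp (v ⬝ᵥ x) + Real.exp (w ⬝ᵥ x))) := by
    have e : Real.exp (v ⬝ᵥ x) + Real.exp (w ⬝ᵥ x) =
        ∑ z ∈ V, (if z = v ∨ z = w then 1 else 0) * Real.exp (z ⬝ᵥ x) := by
      simp only [ite_mul, one_mul, zero_mul]
      rw [← Finset.sum_filter, show V.filter (fun z => z = v ∨ z = w) = {v, w} from ?_,
        Finset.sum_pair hvw]
      ext z
      simp only [Finset.mem_filter, Finset.mem_insert, Finset.mem_singleton]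
      constructor
      · exact fun h => h.2
      · rintro (rfl | rfl)
        · exact ⟨hv, Or.inl rfl⟩
        · exact ⟨hw, Or.inr rfl⟩
    rw [e]
    unfold BK.Z
    apply tendsto_finsetSum
    intro z _
    apply Filter.Tendsto.mul_const
    unfold BK.cs
    by_cases hz : z = v ∨ z = w
    · simp only [hz, if_true]; exact tendsto_const_nhds
    · simp only [hz, if_false]; exact tendsto_one_div_add_atTop_nhds_zero_nat
  have hpos : 0 < Real.exp (v ⬝ᵥ x) + Real.exp (w ⬝ᵥ x) := by positivity
  have hq : ∀ k, BK.q V (BK.cs v w k) (BK.th v w) x (v, w) =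
      (BK.Z V (BK.cs v w k) x)⁻¹ * Real.exp (v ⬝ᵥ x) * ((BK.Z V (BK.cs v w k) x)⁻¹ * Real.exp (w ⬝ᵥ x)) := by
    intro k
    have := BK.Z_pos ⟨v, hv⟩ (BK.cs_pos v w k) x
    simp [BK.q, BK.p_eq this, BK.th, BK.cs]
  simp only [hq]
  have lim := ((hZ.inv₀ hpos.ne').mul_const (Real.exp (v ⬝ᵥ x))).mul ((hZ.inv₀ hpos.ne').mul_const (Real.exp (w ⬝ᵥ x)))
  convert lim using 2
  have h1 : Real.sigmoid ((v - w) ⬝ᵥ x) = (Real.exp (v ⬝ᵥ x) + Real.exp (w ⬝ᵥ x))⁻¹ * Real.exp (v ⬝ᵥ x) := by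
    rw [Real.sigmoid_def, sub_dotProduct, neg_sub, Real.exp_sub]
    have := Real.exp_pos (v ⬝ᵥ x)
    field_simp
  rw [h1]
  congr 1
  field_simp
  ring

theorem BK.one_le {n : ℕ} (V : Fin n → Finset (Fin n → ℝ)) (v w : Fin n → Fin n → ℝ)
    (hv : ∀ i, v i ∈ V i) (hw : ∀ i, w i ∈ V i)
    (hd : 1 ≤ |(Matrix.of fun i => v i - w i).det|) :
    1 ≤ mixedVol (fun i => convexHull ℝ (V i : Set (Fin n → ℝ))) := by
  set U : Matrix (Fin n) (Fin n) ℝ := Matrix.of fun i => v i - w i with hUdef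
  have hU : U.det ≠ 0 := by
    intro h; rw [h] at hd; norm_num at hd
  have hvw : ∀ i, v i ≠ w i := by
    intro i h
    apply hU
    apply Matrix.det_eq_zero_of_row_eq_zero i
    intro j; simp [U, h]
  have hV : ∀ i, (V i).Nonempty := fun i => ⟨_, hv i⟩
  let c : ℕ → Fin n → (Fin n → ℝ) → ℝ := fun k i => BK.cs (v i) (w i) k
  let θ : Fin n → (Fin n → ℝ) × (Fin n → ℝ) → ℝ := fun i => BK.th (v i) (w i)
  let f : ℕ → (Fin n → ℝ) → ℝ := fun k x => (∏ i, BK.q (V i) (c k i) (θ i) x (v i, w i)) * U.det ^ 2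
  have hc : ∀ k i z, 0 < c k i z := fun k i z => BK.cs_pos _ _ _ _
  have hq0 : ∀ k i x a, 0 ≤ BK.q (V i) (c k i) (θ i) x a := fun k i x a =>
    mul_nonneg (BK.th_nonneg _ _ _) (mul_nonneg (BK.p_pos (hc k i) _ _).le (BK.p_pos (hc k i) _ _).le)
  have hbound : ∀ k, ∫⁻ x, ENNReal.ofReal (f k x) ≤
      ENNReal.ofReal (mixedVol (fun i => convexHull ℝ (V i : Set (Fin n → ℝ)))) := by
    intro k
    obtain ⟨hi, he⟩ := BK.mv_eq hV (hc k) (fun i a => BK.th_nonneg (v i) (w i) a) (θ := θ)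
      (fun i a b _ => BK.th_add (v i) (w i) (hvw i) a b)
    rw [he, ofReal_integral_eq_lintegral_ofReal hi]
    · apply lintegral_mono
      intro x
      apply ENNReal.ofReal_le_ofReal
      exact Finset.single_le_sum (f := fun b : Fin n → (Fin n → ℝ) × (Fin n → ℝ) =>
          (∏ i, BK.q (V i) (c k i) (θ i) x (b i)) * (Matrix.of fun i => (b i).1 - (b i).2).det ^ 2)
        (a := fun i => (v i, w i))
        (fun b _ => mul_nonneg (Finset.prod_nonneg fun i _ => hq0 k i x _) (sq_nonneg _))
        (Fintype.mem_piFinset.2 fun i => Finset.mem_product.2 ⟨hv i, hw i⟩)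
    · exact Filter.Eventually.of_forall fun x => Finset.sum_nonneg
        (fun b _ => mul_nonneg (Finset.prod_nonneg fun i _ => hq0 k i x _) (sq_nonneg _))
  have hmeas : ∀ k, Measurable fun x => ENNReal.ofReal (f k x) := by
    intro k
    have : ∀ i z, Continuous (BK.p (V i) (c k i) z) := fun i z =>
      continuous_iff_continuousAt.2 fun x => (BK.hasFDerivAt_p (hV i) (hc k i) z x).continuousAt
    have : Continuous (f k) := by
      simp only [f, BK.q]
      fun_prop
    exact this.measurable.ennreal_ofReal
  have hlim : ∀ x, Filter.Tendsto (fun k => ENNReal.ofReal (f k x)) Filter.atTop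
      (nhds (ENNReal.ofReal ((∏ i, (Real.sigmoid (U.mulVec x i) * (1 - Real.sigmoid (U.mulVec x i)))) * U.det ^ 2))) := by
    intro x
    apply ENNReal.tendsto_ofReal
    apply Filter.Tendsto.mul_const
    apply tendsto_finsetProd
    intro i _
    exact BK.tendsto_q (V i) (v i) (w i) (hv i) (hw i) (hvw i) x
  have hfatou := lintegral_liminf_le (μ := volume) (u := Filter.atTop) hmeas
  have h2 : ∀ x, Filter.liminf (fun k => ENNReal.ofReal (f k x)) Filter.atTop =
      ENNReal.ofReal ((∏ i, (Real.sigmoid (U.mulVec x i) * (1 - Real.sigmoid (U.mulVec x i)))) * U.det ^ 2) :=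
    fun x => (hlim x).liminf_eq
  simp only [h2] at hfatou
  have h3 : Filter.liminf (fun k => ∫⁻ x, ENNReal.ofReal (f k x)) Filter.atTop ≤
      ENNReal.ofReal (mixedVol (fun i => convexHull ℝ (V i : Set (Fin n → ℝ)))) := by
    refine (Filter.liminf_le_liminf (Filter.Eventually.of_forall hbound)).trans ?_
    rw [Filter.liminf_const]
  have h4 : (1 : ENNReal) ≤ ∫⁻ x : Fin n → ℝ, ENNReal.ofReal ((∏ i, (Real.sigmoid (U.mulVec x i) * (1 - Real.sigmoid (U.mulVec x i)))) * U.det ^ 2) := by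
    rw [← BK.sigmoid_integral U hU]
    apply lintegral_mono
    intro x
    apply ENNReal.ofReal_le_ofReal
    apply mul_le_mul_of_nonneg_left
    · rw [← sq_abs]; nlinarith
    · exact Finset.prod_nonneg fun i _ => mul_nonneg (Real.sigmoid_nonneg _) (sub_nonneg.2 (Real.sigmoid_le_one _))
  have h5 := (h4.trans hfatou).trans h3
  rwa [ENNReal.one_le_ofReal] at h5

theorem BK.det_int {n : ℕ} (v w : Fin n → Fin n → ℝ) (hv : ∀ i, IsLatticePt (v i)) (hw : ∀ i, IsLatticePt (w i))
    (hd : (Matrix.of fun i => v i - w i).det ≠ 0) : 1 ≤ |(Matrix.of fun i => v i - w i).det| := by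
  choose a ha using hv
  choose b hb using hw
  have e : (Matrix.of fun i => v i - w i) = (Matrix.of fun i j => a i j - b i j : Matrix (Fin n) (Fin n) ℤ).map (Int.castRingHom ℝ) := by
    ext i j; simp [ha, hb]
  rw [e] at hd ⊢
  have e2 := (Int.castRingHom ℝ).map_det (Matrix.of fun i j => a i j - b i j : Matrix (Fin n) (Fin n) ℤ)
  rw [RingHom.mapMatrix_apply] at e2
  rw [← e2] at hd ⊢
  simp only [eq_intCast] at hd ⊢
  have : (Matrix.of fun i j => a i j - b i j : Matrix (Fin n) (Fin n) ℤ).det ≠ 0 := by exact_mod_cast hd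
  exact_mod_cast Int.one_le_abs this

/-- Bernstein's criterion: MV ≥ 1 iff dim(P_I) ≥ |I| for all nonempty I. -/
theorem one_le_mixedVol_iff_dim_condition {n : ℕ}
    (P : Fin n → Set (Fin n → ℝ)) (hP : ∀ i, IsLatticePolytope (P i)) :
    1 ≤ mixedVol P ↔
      ∀ I : Finset (Fin n), I.Nonempty → I.card ≤ adim (∑ i ∈ I, P i) := by
  choose V hV hL hPV using hP
  obtain rfl : P = fun i => convexHull ℝ (V i : Set (Fin n → ℝ)) := funext hPV
  constructor
  · intro h I _
    by_contra! hI
    obtain ⟨_, he⟩ := BK.mv_eq hV (c := fun _ _ => 1) (θ := fun _ _ => 1 / 2) (by intros; norm_num)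
      (by intros; norm_num) (by intros; norm_num)
    rw [he] at h
    have hz : ∀ x, ∑ b ∈ Fintype.piFinset (fun i => V i ×ˢ V i),
      (∏ i, BK.q (V i) (fun _ => 1) (fun _ => 1 / 2) x (b i)) * (Matrix.of fun i => (b i).1 - (b i).2).det ^ 2 = 0 := by
      intro x
      apply Finset.sum_eq_zero
      intro b hb
      rw [Fintype.mem_piFinset] at hb
      rw [BK.det_zero V hV I hI (fun i => (b i).1) (fun i => (b i).2)
        (fun i => (Finset.mem_product.1 (hb i)).1) (fun i => (Finset.mem_product.1 (hb i)).2)]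
      simp
    simp only [hz, integral_zero] at h
    norm_num at h
  · intro h
    obtain ⟨v, w, hv, hw, hd⟩ := BK.transversal V h
    exact BK.one_le V v w hv hw (BK.det_int v w (fun i => hL i _ (hv i)) (fun i => hL i _ (hw i)) hd)
end

section
/- Let P_1, ..., P_n be lattice polytopes in R^n, and suppose P_1, ..., P_k (1 ≤ k ≤ n) are contained in a k-dimensional rational linear subspace L of R^n. Then MV(P_1,...,P_n) = MV_L(P_1,...,P_k) · MV(π(P_{k+1}), ..., π(P_n)), where π is the lattice projection of R^n along L and the mixed volumes on the right are computed with respect to the induced lattices. -/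
open scoped Pointwise
open MeasureTheory Finset

section MVaux

open Matrix

variable {ι α κ : Type*} [Fintype ι]

/-- The linear functional `x ↦ q ⬝ᵥ x`. -/
noncomputable def mvDot (q : ι → ℝ) : (ι → ℝ) →L[ℝ] ℝ :=
  ∑ j, q j • ContinuousLinearMap.proj (R := ℝ) (φ := fun _ : ι => ℝ) j

lemma mvDot_apply (q x : ι → ℝ) : mvDot q x = q ⬝ᵥ x := by
  simp [mvDot, dotProduct]

/-- Partition function. -/
noncomputable def mvZ (s : Finset α) (c : α → ℝ) (p : α → ι → ℝ) (x : ι → ℝ) : ℝ :=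
  ∑ a ∈ s, c a * Real.exp (p a ⬝ᵥ x)

/-- Gibbs weights. -/
noncomputable def mvW (s : Finset α) (c : α → ℝ) (p : α → ι → ℝ) (x : ι → ℝ) (a : α) : ℝ :=
  c a * Real.exp (p a ⬝ᵥ x) / mvZ s c p x

/-- Moment map. -/
noncomputable def mvF (s : Finset α) (c : α → ℝ) (p : α → ι → ℝ) (x : ι → ℝ) : ι → ℝ :=
  ∑ a ∈ s, mvW s c p x a • p a

/-- Hessian (covariance) matrix. -/
noncomputable def mvH (s : Finset α) (c : α → ℝ) (p : α → ι → ℝ) (x : ι → ℝ) : Matrix ι ι ℝ :=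
  Matrix.of fun i j => ∑ a ∈ s, mvW s c p x a * (p a i * p a j)
    - (∑ a ∈ s, mvW s c p x a * p a i) * (∑ a ∈ s, mvW s c p x a * p a j)

variable {s : Finset α} {c : α → ℝ} {p : α → ι → ℝ}

lemma mvZ_pos (hs : s.Nonempty) (hc : ∀ a ∈ s, 0 < c a) (x : ι → ℝ) : 0 < mvZ s c p x :=
  Finset.sum_pos (fun a ha => mul_pos (hc a ha) (Real.exp_pos _)) hs

lemma mvW_pos (hs : s.Nonempty) (hc : ∀ a ∈ s, 0 < c a) (x : ι → ℝ) {a : α} (ha : a ∈ s) :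
    0 < mvW s c p x a :=
  div_pos (mul_pos (hc a ha) (Real.exp_pos _)) (mvZ_pos hs hc x)

lemma mvW_sum (hs : s.Nonempty) (hc : ∀ a ∈ s, 0 < c a) (x : ι → ℝ) :
    ∑ a ∈ s, mvW s c p x a = 1 := by
  unfold mvW
  rw [← Finset.sum_div]
  exact div_self (mvZ_pos hs hc x).ne'

lemma mvF_dot (x u : ι → ℝ) : mvF s c p x ⬝ᵥ u = ∑ a ∈ s, mvW s c p x a * (p a ⬝ᵥ u) := by
  simp [mvF, sum_dotProduct]

lemma mvF_apply (x : ι → ℝ) (j : ι) : mvF s c p x j = ∑ a ∈ s, mvW s c p x a * p a j := by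
  simp [mvF, Finset.sum_apply]

lemma mvH_mulVec (x u : ι → ℝ) (i : ι) :
    (mvH s c p x *ᵥ u) i = ∑ a ∈ s, mvW s c p x a * p a i * (p a ⬝ᵥ u)
      - (∑ a ∈ s, mvW s c p x a * p a i) * (∑ a ∈ s, mvW s c p x a * (p a ⬝ᵥ u)) := by
  have h1 : ∑ a ∈ s, mvW s c p x a * (p a ⬝ᵥ u) = ∑ j, (∑ a ∈ s, mvW s c p x a * p a j) * u j := by
    rw [← mvF_dot, dotProduct]
    exact Finset.sum_congr rfl fun j _ => by rw [mvF_apply]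
  have h2 : ∑ a ∈ s, mvW s c p x a * p a i * (p a ⬝ᵥ u) =
      ∑ j, (∑ a ∈ s, mvW s c p x a * (p a i * p a j)) * u j := by
    simp only [dotProduct, Finset.mul_sum, Finset.sum_mul]
    rw [Finset.sum_comm]
    exact Finset.sum_congr rfl fun a _ => Finset.sum_congr rfl fun j _ => by ring
  rw [h1, h2, Finset.mul_sum, ← Finset.sum_sub_distrib]
  simp only [mvH, mulVec, dotProduct, Matrix.of_apply]
  exact Finset.sum_congr rfl fun j _ => by ring

lemma mvH_quad (hs : s.Nonempty) (hc : ∀ a ∈ s, 0 < c a) (x u : ι → ℝ) :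
    u ⬝ᵥ (mvH s c p x *ᵥ u) =
      ∑ a ∈ s, mvW s c p x a * (p a ⬝ᵥ u - mvF s c p x ⬝ᵥ u) ^ 2 := by
  have h1 : u ⬝ᵥ (mvH s c p x *ᵥ u) = ∑ a ∈ s, mvW s c p x a * (p a ⬝ᵥ u) ^ 2
      - (mvF s c p x ⬝ᵥ u) ^ 2 := by
    have h2 : (mvF s c p x ⬝ᵥ u) ^ 2 = ∑ i, u i * ((∑ a ∈ s, mvW s c p x a * p a i) *
        (∑ a ∈ s, mvW s c p x a * (p a ⬝ᵥ u))) := by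
      rw [sq]
      nth_rewrite 2 [mvF_dot]
      rw [dotProduct, Finset.sum_mul]
      refine Finset.sum_congr rfl fun i _ => ?_
      rw [mvF_apply]; ring
    have h3 : ∑ a ∈ s, mvW s c p x a * (p a ⬝ᵥ u) ^ 2 =
        ∑ i, u i * ∑ a ∈ s, mvW s c p x a * p a i * (p a ⬝ᵥ u) := by
      simp_rw [Finset.mul_sum]
      rw [Finset.sum_comm]
      refine Finset.sum_congr rfl fun a _ => ?_
      rw [sq]
      nth_rewrite 1 [dotProduct]
      rw [Finset.sum_mul, Finset.mul_sum]
      exact Finset.sum_congr rfl fun i _ => by ring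
    rw [h2, h3, ← Finset.sum_sub_distrib, dotProduct]
    exact Finset.sum_congr rfl fun i _ => by rw [mvH_mulVec]; ring
  rw [h1]
  have h4 : ∀ a ∈ s, mvW s c p x a * (p a ⬝ᵥ u - mvF s c p x ⬝ᵥ u) ^ 2 =
      mvW s c p x a * (p a ⬝ᵥ u) ^ 2 - 2 * (mvF s c p x ⬝ᵥ u) * (mvW s c p x a * (p a ⬝ᵥ u))
        + (mvF s c p x ⬝ᵥ u) ^ 2 * mvW s c p x a := fun a _ => by ring
  rw [Finset.sum_congr rfl h4, Finset.sum_add_distrib, Finset.sum_sub_distrib, ← Finset.mul_sum,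
    ← Finset.mul_sum, ← mvF_dot, mvW_sum hs hc]
  ring

lemma mvH_quad_nonneg (hs : s.Nonempty) (hc : ∀ a ∈ s, 0 < c a) (x u : ι → ℝ) :
    0 ≤ u ⬝ᵥ (mvH s c p x *ᵥ u) := by
  rw [mvH_quad hs hc]
  exact Finset.sum_nonneg fun a ha => mul_nonneg (mvW_pos hs hc x ha).le (sq_nonneg _)

lemma mvH_quad_pos (hs : s.Nonempty) (hc : ∀ a ∈ s, 0 < c a) (x u : ι → ℝ)
    (h : ∃ a ∈ s, ∃ b ∈ s, p a ⬝ᵥ u ≠ p b ⬝ᵥ u) :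
    0 < u ⬝ᵥ (mvH s c p x *ᵥ u) := by
  rw [mvH_quad hs hc]
  obtain ⟨a, ha, b, hb, hab⟩ := h
  have : ∃ d ∈ s, p d ⬝ᵥ u ≠ mvF s c p x ⬝ᵥ u := by
    by_contra! hh
    exact hab ((hh a ha).trans (hh b hb).symm)
  obtain ⟨d, hd, hdu⟩ := this
  refine Finset.sum_pos' (fun a ha => mul_nonneg (mvW_pos hs hc x ha).le (sq_nonneg _)) ⟨d, hd, ?_⟩
  exact mul_pos (mvW_pos hs hc x hd) (by have := sub_ne_zero.2 hdu; positivity)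

lemma mvH_mulVec_zero (hs : s.Nonempty) (hc : ∀ a ∈ s, 0 < c a) (x u : ι → ℝ)
    (h : ∀ a ∈ s, ∀ b ∈ s, p a ⬝ᵥ u = p b ⬝ᵥ u) :
    mvH s c p x *ᵥ u = 0 := by
  obtain ⟨b, hb⟩ := hs
  ext i
  rw [mvH_mulVec]
  have h1 : ∀ a ∈ s, mvW s c p x a * p a i * (p a ⬝ᵥ u) = mvW s c p x a * p a i * (p b ⬝ᵥ u) :=
    fun a ha => by rw [h a ha b hb]
  have h2 : ∀ a ∈ s, mvW s c p x a * (p a ⬝ᵥ u) = mvW s c p x a * (p b ⬝ᵥ u) :=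
    fun a ha => by rw [h a ha b hb]
  rw [Finset.sum_congr rfl h1, Finset.sum_congr rfl h2, ← Finset.sum_mul, ← Finset.sum_mul,
    mvW_sum ⟨b, hb⟩ hc]
  simp

lemma mvH_symm (x : ι → ℝ) : (mvH s c p x).IsHermitian := by
  ext i j
  simp only [mvH, conjTranspose_apply, of_apply, star_trivial]
  rw [mul_comm (∑ a ∈ s, mvW s c p x a * p a j)]
  congr 1
  exact Finset.sum_congr rfl fun a _ => by ring

lemma mvExp_hasFDerivAt (q : ι → ℝ) (d : ℝ) (x : ι → ℝ) :
    HasFDerivAt (fun x => d * Real.exp (q ⬝ᵥ x)) ((d * Real.exp (q ⬝ᵥ x)) • mvDot q) x := by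
  have h : HasFDerivAt (fun x => q ⬝ᵥ x) (mvDot q) x := by
    have := (mvDot q).hasFDerivAt (x := x)
    refine this.congr_of_eventuallyEq (Filter.Eventually.of_forall fun y => ?_)
    exact (mvDot_apply q y).symm
  have := h.exp.const_mul d
  rwa [smul_smul] at this

lemma mvZ_hasFDerivAt (x : ι → ℝ) :
    HasFDerivAt (mvZ s c p) (∑ a ∈ s, (c a * Real.exp (p a ⬝ᵥ x)) • mvDot (p a)) x := by
  have := HasFDerivAt.fun_sum (u := s) fun a (_ : a ∈ s) => mvExp_hasFDerivAt (p a) (c a) x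
  exact this

lemma mvLogZ_hasFDerivAt (hs : s.Nonempty) (hc : ∀ a ∈ s, 0 < c a) (x : ι → ℝ) :
    HasFDerivAt (fun x => Real.log (mvZ s c p x)) (mvDot (mvF s c p x)) x := by
  refine ((mvZ_hasFDerivAt (s := s) (c := c) (p := p) x).log (mvZ_pos hs hc x).ne').congr_fderiv ?_
  ext u
  simp only [mvDot_apply, mvF_dot, mvW, _root_.smul_apply,
    _root_.sum_apply, smul_eq_mul, Finset.mul_sum]
  exact Finset.sum_congr rfl fun a _ => by ring

lemma mvW_hasFDerivAt (hs : s.Nonempty) (hc : ∀ a ∈ s, 0 < c a) (x : ι → ℝ) (a : α) :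
    HasFDerivAt (fun x => mvW s c p x a)
      (mvW s c p x a • (mvDot (p a) - mvDot (mvF s c p x))) x := by
  have hZ := (mvZ_pos (p := p) hs hc x).ne'
  have h := (mvExp_hasFDerivAt (p a) (c a) x).mul
    ((hasDerivAt_inv hZ).comp_hasFDerivAt x (mvZ_hasFDerivAt (s := s) (c := c) (p := p) x))
  refine (h.congr_fderiv ?_)
  ext u
  simp only [mvDot_apply, mvF_dot, mvW, _root_.smul_apply, 
    _root_.add_apply, _root_.sub_apply,
    _root_.sum_apply, smul_eq_mul, Function.comp_apply]
  have : ∑ b ∈ s, c b * Real.exp (p b ⬝ᵥ x) / mvZ s c p x * (p b ⬝ᵥ u)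
     = (∑ b ∈ s, c b * Real.exp (p b ⬝ᵥ x) * (p b ⬝ᵥ u)) / mvZ s c p x := by
    rw [Finset.sum_div]
    exact Finset.sum_congr rfl fun a _ => by ring
  rw [this]
  field_simp
  try ring

lemma mvF_hasFDerivAt [DecidableEq ι] (hs : s.Nonempty) (hc : ∀ a ∈ s, 0 < c a) (x : ι → ℝ) :
    HasFDerivAt (mvF s c p) (LinearMap.toContinuousLinearMap (Matrix.toLin' (mvH s c p x))) x := by
  rw [hasFDerivAt_pi']
  intro i
  have h : HasFDerivAt (fun x => ∑ a ∈ s, mvW s c p x a * p a i) _ x :=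
    HasFDerivAt.fun_sum (u := s) fun a (_ : a ∈ s) => 
      (mvW_hasFDerivAt (p := p) hs hc x a).mul_const (p a i)
  simp_rw [mvF_apply]
  refine h.congr_fderiv ?_
  ext u
  simp only [_root_.sum_apply, _root_.smul_apply,
    _root_.sub_apply, mvDot_apply, smul_eq_mul, ContinuousLinearMap.comp_apply,
    ContinuousLinearMap.proj_apply, LinearMap.coe_toContinuousLinearMap', Matrix.toLin'_apply,
    mvH_mulVec]
  rw [← mvF_dot, Finset.sum_mul, ← Finset.sum_sub_distrib]
  exact Finset.sum_congr rfl fun a _ => by ring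


/-- Minkowski sum of the polytopes. -/
def mvS (I : Finset κ) (s : κ → Finset α) (p : κ → α → ι → ℝ) : Set (ι → ℝ) :=
  ∑ i ∈ I, convexHull ℝ (p i '' (s i : Set α))

lemma mvS_convex (I : Finset κ) (s : κ → Finset α) (p : κ → α → ι → ℝ) :
    Convex ℝ (mvS I s p) :=
  convex_sum _ fun _ _ => convex_convexHull ℝ _

lemma mvS_compact (I : Finset κ) (s : κ → Finset α) (p : κ → α → ι → ℝ) :
    IsCompact (mvS I s p) := by
  classical
  unfold mvS
  induction I using Finset.induction_on with
  | empty => simp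
  | insert a t ha ih =>
    rw [Finset.sum_insert ha]
    exact IsCompact.add (Set.Finite.isCompact_convexHull (𝕜 := ℝ) ((s a).finite_toSet.image _)) ih

section
variable {I : Finset κ} {s : κ → Finset α} {c : κ → α → ℝ} {p : κ → α → ι → ℝ}

lemma mvF_mem (hs : ∀ i, (s i).Nonempty) (hc : ∀ i, ∀ a ∈ s i, 0 < c i a) (x : ι → ℝ) :
    ∑ i ∈ I, mvF (s i) (c i) (p i) x ∈ mvS I s p := by
  refine Set.finsetSum_mem_finsetSum _ _ _ fun i _ => ?_
  refine (convex_convexHull ℝ _).sum_mem (fun a ha => (mvW_pos (hs i) (hc i) x ha).le)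
    (mvW_sum (hs i) (hc i) x) fun a ha => ?_
  exact subset_convexHull ℝ _ ⟨a, ha, rfl⟩

lemma mvS_dot_le (hs : ∀ i, (s i).Nonempty) (hc : ∀ i, ∀ a ∈ s i, 0 < c i a) (x : ι → ℝ)
    {z : ι → ℝ} (hz : z ∈ mvS I s p) :
    z ⬝ᵥ x ≤ ∑ i ∈ I, Real.log (mvZ (s i) (c i) (p i) x) +
      ∑ i ∈ I, ∑ a ∈ s i, |Real.log (c i a)| := by
  rw [mvS, Set.mem_finsetSum] at hz
  obtain ⟨g, hg, rfl⟩ := hz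
  rw [sum_dotProduct, ← Finset.sum_add_distrib]
  refine Finset.sum_le_sum fun i hi => ?_
  have hsub : convexHull ℝ (p i '' (s i : Set α)) ⊆
      {z | mvDot x z ≤ Real.log (mvZ (s i) (c i) (p i) x) + ∑ a ∈ s i, |Real.log (c i a)|} := by
    refine convexHull_min ?_ (convex_halfSpace_le (mvDot x).isLinear _)
    rintro _ ⟨a, ha, rfl⟩
    have ha' : a ∈ s i := ha
    have h1 : c i a * Real.exp (p i a ⬝ᵥ x) ≤ mvZ (s i) (c i) (p i) x :=
      Finset.single_le_sum (f := fun a => c i a * Real.exp (p i a ⬝ᵥ x))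
        (fun b hb => (mul_pos (hc i b hb) (Real.exp_pos _)).le) ha'
    have h2 := Real.log_le_log (mul_pos (hc i a ha') (Real.exp_pos _)) h1
    rw [Real.log_mul (hc i a ha').ne' (Real.exp_pos _).ne', Real.log_exp] at h2
    have h3 : |Real.log (c i a)| ≤ ∑ a ∈ s i, |Real.log (c i a)| :=
      Finset.single_le_sum (f := fun a => |Real.log (c i a)|) (fun b _ => abs_nonneg _) ha'
    have h4 := neg_abs_le (Real.log (c i a))
    simp only [Set.mem_ofPred_eq, mvDot_apply]
    rw [dotProduct_comm]
    linarith
  have := hsub (hg hi)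
  simp only [Set.mem_ofPred_eq, mvDot_apply] at this
  rwa [dotProduct_comm]

lemma mvF_surj (hs : ∀ i, (s i).Nonempty) (hc : ∀ i, ∀ a ∈ s i, 0 < c i a)
    {y : ι → ℝ} (hy : y ∈ interior (mvS I s p)) :
    ∃ x, ∑ i ∈ I, mvF (s i) (c i) (p i) x = y := by
  obtain ⟨ε, hε, hball⟩ := Metric.nhds_basis_closedBall.mem_iff.1 (mem_interior_iff_mem_nhds.1 hy)
  set C := ∑ i ∈ I, ∑ a ∈ s i, |Real.log (c i a)| with hC
  let g : (ι → ℝ) → ℝ := fun x => ∑ i ∈ I, Real.log (mvZ (s i) (c i) (p i) x) - mvDot y x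
  have hg : ∀ x, HasFDerivAt g (∑ i ∈ I, mvDot (mvF (s i) (c i) (p i) x) - mvDot y) x := fun x =>
    (HasFDerivAt.fun_sum (u := I) fun i _ => mvLogZ_hasFDerivAt (hs i) (hc i) x).sub
      (mvDot y).hasFDerivAt
  have hgc : Continuous g := continuous_iff_continuousAt.2 fun x => (hg x).continuousAt
  have hlow : ∀ x, ε * ‖x‖ - C ≤ g x := by
    intro x
    by_cases hx : x = 0
    · subst hx
      have := mvS_dot_le hs hc 0 (interior_subset hy)
      simp only [dotProduct_zero] at this
      simp only [g, norm_zero, map_zero]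
      linarith
    have hn : 0 < ‖x‖ := norm_pos_iff.2 hx
    have hz : y + (ε / ‖x‖) • x ∈ mvS I s p := by
      apply hball
      rw [mem_closedBall_iff_norm, add_sub_cancel_left, norm_smul, Real.norm_eq_abs,
        abs_of_pos (by positivity)]
      field_simp
      exact le_refl _
    have h1 := mvS_dot_le hs hc x hz
    rw [add_dotProduct, smul_dotProduct, smul_eq_mul] at h1
    have h2 : ‖x‖ ^ 2 ≤ x ⬝ᵥ x := by
      have h3 : ‖x‖ ≤ Real.sqrt (x ⬝ᵥ x) := by
        refine (pi_norm_le_iff_of_nonneg (Real.sqrt_nonneg _)).2 fun i => ?_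
        rw [Real.norm_eq_abs]
        refine Real.abs_le_sqrt ?_
        rw [sq]
        exact Finset.single_le_sum (f := fun i => x i * x i) (fun j _ => mul_self_nonneg _)
          (Finset.mem_univ i)
      calc ‖x‖ ^ 2 ≤ Real.sqrt (x ⬝ᵥ x) ^ 2 := by gcongr
        _ = _ := Real.sq_sqrt (Finset.sum_nonneg fun i _ => mul_self_nonneg _)
    have h4 : ε * ‖x‖ ≤ ε / ‖x‖ * (x ⬝ᵥ x) := by
      calc ε * ‖x‖ = ε / ‖x‖ * ‖x‖ ^ 2 := by field_simp
        _ ≤ _ := by gcongr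
    simp only [g, mvDot_apply]
    linarith
  have htend : Filter.Tendsto g (Filter.cocompact _) Filter.atTop := by
    refine Filter.tendsto_atTop_mono hlow ?_
    exact Filter.tendsto_atTop_add_const_right _ _
      ((tendsto_norm_cocompact_atTop (E := ι → ℝ)).const_mul_atTop hε)
  obtain ⟨x, hx⟩ := hgc.exists_forall_le htend
  refine ⟨x, ?_⟩
  have h0 := IsLocalMin.hasFDerivAt_eq_zero (Filter.Eventually.of_forall hx) (hg x)
  have h1 : ∀ u, (∑ i ∈ I, mvF (s i) (c i) (p i) x) ⬝ᵥ u = y ⬝ᵥ u := by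
    intro u
    have := congrArg (fun f : (ι → ℝ) →L[ℝ] ℝ => f u) h0
    simp only [_root_.sub_apply, _root_.sum_apply, mvDot_apply, _root_.zero_apply] at this
    rw [sum_dotProduct]
    linarith
  exact dotProduct_eq _ _ h1

lemma mvFsum_hasFDerivAt [DecidableEq ι] (hs : ∀ i, (s i).Nonempty)
    (hc : ∀ i, ∀ a ∈ s i, 0 < c i a) (x : ι → ℝ) :
    HasFDerivAt (fun x => ∑ i ∈ I, mvF (s i) (c i) (p i) x)
      (LinearMap.toContinuousLinearMap
        (Matrix.toLin' (∑ i ∈ I, mvH (s i) (c i) (p i) x))) x := by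
  refine (HasFDerivAt.fun_sum (u := I) fun i _ => mvF_hasFDerivAt (hs i) (hc i) x).congr_fderiv ?_
  simp [map_sum]

lemma mvS_volume (hs : ∀ i, (s i).Nonempty) (hc : ∀ i, ∀ a ∈ s i, 0 < c i a) :
    volume (mvS I s p) =
      volume (Set.range (fun x => ∑ i ∈ I, mvF (s i) (c i) (p i) x)) := by
  apply le_antisymm
  · calc volume (mvS I s p) ≤ volume (interior (mvS I s p) ∪ frontier (mvS I s p)) := by
          refine measure_mono ?_
          rw [← closure_eq_interior_union_frontier]
          exact subset_closure
      _ ≤ volume (interior (mvS I s p)) + volume (frontier (mvS I s p)) := measure_union_le _ _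
      _ = volume (interior (mvS I s p)) := by
          rw [(mvS_convex I s p).addHaar_frontier volume, add_zero]
      _ ≤ _ := measure_mono fun y hy => mvF_surj hs hc hy
  · refine measure_mono ?_
    rintro _ ⟨x, rfl⟩
    exact mvF_mem hs hc x

lemma mvHsum_posSemidef (hs : ∀ i, (s i).Nonempty) (hc : ∀ i, ∀ a ∈ s i, 0 < c i a) (x : ι → ℝ) :
    (∑ i ∈ I, mvH (s i) (c i) (p i) x).PosSemidef := by
  refine Matrix.posSemidef_sum _ fun i _ => ?_
  exact .of_dotProduct_mulVec_nonneg (mvH_symm x) fun u => by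
    simpa using mvH_quad_nonneg (hs i) (hc i) x u

theorem mvMain [DecidableEq ι] (hs : ∀ i, (s i).Nonempty) (hc : ∀ i, ∀ a ∈ s i, 0 < c i a) :
    Integrable (fun x => (∑ i ∈ I, mvH (s i) (c i) (p i) x).det) ∧
    ∫ x, (∑ i ∈ I, mvH (s i) (c i) (p i) x).det = (volume (mvS I s p)).toReal := by
  by_cases hnd : ∀ u : ι → ℝ, u ≠ 0 → ∃ i ∈ I, ∃ a ∈ s i, ∃ b ∈ s i, p i a ⬝ᵥ u ≠ p i b ⬝ᵥ u
  · have hquad : ∀ x u : ι → ℝ, u ≠ 0 →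
        0 < u ⬝ᵥ ((∑ i ∈ I, mvH (s i) (c i) (p i) x) *ᵥ u) := by
      intro x u hu
      obtain ⟨i, hi, h⟩ := hnd u hu
      rw [sum_mulVec, dotProduct_sum]
      exact Finset.sum_pos' (fun j _ => mvH_quad_nonneg (hs j) (hc j) x u)
        ⟨i, hi, mvH_quad_pos (hs i) (hc i) x u h⟩
    have hinj : Function.Injective (fun x => ∑ i ∈ I, mvF (s i) (c i) (p i) x) := by
      intro x y hxy
      by_contra hne
      have hu : y - x ≠ 0 := sub_ne_zero.2 (Ne.symm hne)
      let φ : ℝ → ℝ := fun t =>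
        mvDot (y - x) (∑ i ∈ I, mvF (s i) (c i) (p i) (x + t • (y - x)))
      have hφ : ∀ t, HasDerivAt φ ((y - x) ⬝ᵥ
          ((∑ i ∈ I, mvH (s i) (c i) (p i) (x + t • (y - x))) *ᵥ (y - x))) t := by
        intro t
        have h1 : HasDerivAt (fun t : ℝ => x + t • (y - x)) (y - x) t := by
          simpa using ((hasDerivAt_id t).smul_const (y - x)).const_add x
        have h2 := (mvFsum_hasFDerivAt (I := I) (p := p) hs hc
          (x + t • (y - x))).comp_hasDerivAt t h1
        have h3 := (mvDot (y - x)).hasFDerivAt.comp_hasDerivAt t h2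
        rwa [LinearMap.coe_toContinuousLinearMap', Matrix.toLin'_apply, mvDot_apply] at h3
      have hmono : StrictMono φ := strictMono_of_deriv_pos fun t => by
        rw [(hφ t).deriv]
        exact hquad _ _ hu
      have := hmono zero_lt_one
      simp only [φ, zero_smul, add_zero, one_smul, add_sub_cancel] at this
      simp only at hxy
      rw [hxy] at this
      exact lt_irrefl _ this
    have hder : ∀ x ∈ (Set.univ : Set (ι → ℝ)), HasFDerivWithinAt
        (fun x => ∑ i ∈ I, mvF (s i) (c i) (p i) x)
        (LinearMap.toContinuousLinearMap
          (Matrix.toLin' (∑ i ∈ I, mvH (s i) (c i) (p i) x))) Set.univ x := fun x _ =>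
      (mvFsum_hasFDerivAt hs hc x).hasFDerivWithinAt
    have hdet : ∀ x, |(LinearMap.toContinuousLinearMap
        (Matrix.toLin' (∑ i ∈ I, mvH (s i) (c i) (p i) x))).det| =
          (∑ i ∈ I, mvH (s i) (c i) (p i) x).det := by
      intro x
      rw [ContinuousLinearMap.det, LinearMap.coe_toContinuousLinearMap, LinearMap.det_toLin']
      exact abs_of_nonneg (mvHsum_posSemidef hs hc x).det_nonneg
    have hfin : volume (Set.range (fun x => ∑ i ∈ I, mvF (s i) (c i) (p i) x)) ≠ ⊤ := by
      rw [← mvS_volume hs hc]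
      exact (mvS_compact I s p).measure_lt_top.ne
    have e1 := integral_image_eq_integral_abs_det_fderiv_smul volume MeasurableSet.univ hder
      hinj.injOn (fun _ => (1 : ℝ))
    have e2 := integrableOn_image_iff_integrableOn_abs_det_fderiv_smul volume MeasurableSet.univ
      hder hinj.injOn (fun _ => (1 : ℝ))
    simp only [hdet, Set.image_univ, smul_eq_mul, mul_one, integrableOn_univ,
      Measure.restrict_univ] at e1 e2
    refine ⟨e2.1 ?_, ?_⟩
    · exact integrableOn_const hfin
    · rw [← e1, mvS_volume hs hc]
      simp [Measure.real]
  · push Not at hnd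
    obtain ⟨u, hu, h⟩ := hnd
    have hdet : ∀ x, (∑ i ∈ I, mvH (s i) (c i) (p i) x).det = 0 := by
      intro x
      rw [← Matrix.exists_mulVec_eq_zero_iff]
      refine ⟨u, hu, ?_⟩
      rw [sum_mulVec]
      exact Finset.sum_eq_zero fun i hi => mvH_mulVec_zero (hs i) (hc i) x u (h i hi)
    have h0 : volume (mvS I s p) = 0 := by
      rw [mvS_volume hs hc, ← Set.image_univ]
      refine addHaar_image_eq_zero_of_det_fderivWithin_eq_zero volume
        (fun x _ => (mvFsum_hasFDerivAt hs hc x).hasFDerivWithinAt) fun x _ => ?_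
      rw [ContinuousLinearMap.det, LinearMap.coe_toContinuousLinearMap, LinearMap.det_toLin']
      exact hdet x
    simp [hdet, h0]

end

/-- Mixed discriminant (via inclusion-exclusion). -/
noncomputable def mvMD [Fintype κ] [DecidableEq ι] (M : κ → Matrix ι ι ℝ) : ℝ :=
  ∑ I : Finset κ, (-1 : ℝ) ^ (Fintype.card κ - I.card) * (∑ i ∈ I, M i).det

lemma mvSign [Fintype κ] [DecidableEq κ] (R : Finset κ) :
    ∑ I : Finset κ, (if R ⊆ I then (-1 : ℝ) ^ (Fintype.card κ - I.card) else 0) =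
      if R = univ then 1 else 0 := by
  have h1 : ∑ I : Finset κ, (if R ⊆ I then (-1 : ℝ) ^ (Fintype.card κ - I.card) else 0) =
      ∑ J : Finset κ, (if J ⊆ Rᶜ then (-1 : ℝ) ^ J.card else 0) := by
    refine Fintype.sum_equiv (Equiv.mk Compl.compl Compl.compl _root_.compl_compl _root_.compl_compl) _ _ fun I => ?_
    simp only [Equiv.coe_fn_mk, Finset.card_compl, Finset.compl_subset_compl]
  rw [h1, ← Finset.sum_filter]
  have h2 : (univ.filter fun J : Finset κ => J ⊆ Rᶜ) = Rᶜ.powerset := by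
    ext J; simp
  rw [h2]
  have h3 := Finset.sum_powerset_neg_one_pow_card (x := Rᶜ)
  have h4 := congrArg (fun z : ℤ => (z : ℝ)) h3
  push_cast at h4
  rw [h4]
  simp [Finset.compl_eq_empty_iff]

lemma mvPolar [Fintype κ] [DecidableEq ι] [DecidableEq κ] (M : κ → Matrix ι ι ℝ) :
    mvMD M = ∑ f : ι → κ, if Finset.univ.image f = univ then
      (Matrix.of fun r => M (f r) r).det else 0 := by
  have h1 : ∀ I : Finset κ, (∑ i ∈ I, M i).det =
      ∑ f : ι → κ, if Finset.univ.image f ⊆ I then (Matrix.of fun r => M (f r) r).det else 0 := by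
    intro I
    have := (Matrix.detRowAlternating (n := ι) (R := ℝ)).toMultilinearMap.map_sum_finset
      (fun r i => M i r) (fun _ : ι => I)
    have e : (fun r => ∑ j ∈ I, M j r) = ∑ j ∈ I, M j := by
      ext r t
      simp [Matrix.sum_apply]
    rw [e] at this
    refine Eq.trans this ?_
    rw [← Finset.sum_filter]
    refine Finset.sum_congr ?_ fun f _ => rfl
    ext f
    simp [Fintype.mem_piFinset, Finset.image_subset_iff]
  unfold mvMD
  simp_rw [h1, Finset.mul_sum]
  rw [Finset.sum_comm]
  refine Finset.sum_congr rfl fun f _ => ?_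
  have := mvSign (Finset.univ.image f)
  calc _ = (∑ I : Finset κ, (if Finset.univ.image f ⊆ I then
        (-1 : ℝ) ^ (Fintype.card κ - I.card) else 0)) * (Matrix.of fun r => M (f r) r).det := by
        rw [Finset.sum_mul]
        exact Finset.sum_congr rfl fun I _ => by split_ifs <;> simp
    _ = _ := by rw [this]; split_ifs <;> simp

lemma mvImage {β γ : Type*} [Fintype β] [Fintype γ] [DecidableEq γ] (f : β → γ) :
    Finset.univ.image f = univ ↔ Function.Surjective f := by
  simp [Finset.ext_iff, Function.Surjective]

lemma mvMD_block [Fintype κ] [DecidableEq ι] [DecidableEq κ]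
    (M : ι ⊕ κ → Matrix (ι ⊕ κ) (ι ⊕ κ) ℝ)
    (h12 : ∀ i r t, M (Sum.inl i) (Sum.inl r) (Sum.inr t) = 0)
    (h2 : ∀ i r t, M (Sum.inl i) (Sum.inr r) t = 0) :
    mvMD M = mvMD (fun i => (M (Sum.inl i)).toBlocks₁₁) *
      mvMD (fun j => (M (Sum.inr j)).toBlocks₂₂) := by
  rw [mvPolar, mvPolar, mvPolar, Finset.sum_mul_sum, ← Finset.sum_product']
  symm
  refine Finset.sum_of_injOn (fun q : (ι → ι) × (κ → κ) => Sum.map q.1 q.2) ?_ ?_ ?_ ?_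
  · rintro ⟨f, g⟩ _ ⟨f', g'⟩ _ h
    simp only at h
    rw [Prod.mk.injEq]
    constructor
    · ext i; have := congrFun h (Sum.inl i); simpa using this
    · ext i; have := congrFun h (Sum.inr i); simpa using this
  · intro _ _; simp
  · intro f _ hf
    split_ifs with hsurj
    swap
    · rfl
    by_contra hdet
    apply hf
    have hs : Function.Surjective f := fun y => by
      have : y ∈ Finset.univ.image f := by rw [hsurj]; simp
      simpa using this
    have hb : Function.Bijective f := Finite.surjective_iff_bijective.1 hs
    have hr : ∀ r : κ, ∃ t, f (Sum.inr r) = Sum.inr t := by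
      intro r
      rcases hfr : f (Sum.inr r) with i | t
      · exfalso
        apply hdet
        apply Matrix.det_eq_zero_of_row_eq_zero (Sum.inr r)
        intro t
        simp [hfr, h2]
      · exact ⟨t, rfl⟩
    choose g hg using hr
    have hginj : Function.Injective g := by
      intro a b hab
      have : f (Sum.inr a) = f (Sum.inr b) := by rw [hg, hg, hab]
      simpa using hb.1 this
    have hgs : Function.Surjective g := Finite.injective_iff_surjective.1 hginj
    have hl : ∀ r : ι, ∃ t, f (Sum.inl r) = Sum.inl t := by
      intro r
      rcases hfr : f (Sum.inl r) with i | t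
      · exact ⟨i, rfl⟩
      · exfalso
        obtain ⟨b, rfl⟩ := hgs t
        rw [← hg] at hfr
        simpa using hb.1 hfr
    choose g' hg' using hl
    refine ⟨(g', g), by simp, ?_⟩
    ext (i | i)
    · simp [hg']
    · simp [hg]
  · rintro ⟨f, g⟩ _
    have himg : Finset.univ.image (Sum.map f g) = univ ↔
        Finset.univ.image f = univ ∧ Finset.univ.image g = univ := by
      rw [mvImage, mvImage, mvImage]
      exact Sum.map_surjective
    have hmat : (Matrix.of fun r => M (Sum.map f g r) r) = Matrix.fromBlocks
        (Matrix.of fun r => (M (Sum.inl (f r))).toBlocks₁₁ r) 0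
        (Matrix.of fun r t => M (Sum.inr (g r)) (Sum.inr r) (Sum.inl t))
        (Matrix.of fun r => (M (Sum.inr (g r))).toBlocks₂₂ r) := by
      ext (r | r) (t | t) <;> simp [h12, Matrix.toBlocks₁₁, Matrix.toBlocks₂₂]
    simp only [himg]
    rw [hmat, Matrix.det_fromBlocks_zero₁₂]
    by_cases hf : Finset.univ.image f = univ <;> by_cases hg : Finset.univ.image g = univ <;>
      simp [hf, hg]


/-- Mixed volume over general finite index types. -/
noncomputable def mvMV [Fintype κ] (P : κ → Set (ι → ℝ)) : ℝ :=
  ∑ I : Finset κ, (-1 : ℝ) ^ (Fintype.card κ - I.card) * (volume (∑ i ∈ I, P i)).toReal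

theorem mvMV_eq [Fintype κ] [DecidableEq ι] {s : κ → Finset α} {c : κ → α → ℝ}
    {p : κ → α → ι → ℝ} (hs : ∀ i, (s i).Nonempty) (hc : ∀ i, ∀ a ∈ s i, 0 < c i a) :
    Integrable (fun x => mvMD fun i => mvH (s i) (c i) (p i) x) ∧
    ∫ x, (mvMD fun i => mvH (s i) (c i) (p i) x) =
      mvMV fun i => convexHull ℝ (p i '' (s i : Set α)) := by
  have hIntg : ∀ I ∈ (univ : Finset (Finset κ)), Integrable (fun x =>
      (-1 : ℝ) ^ (Fintype.card κ - I.card) * (∑ i ∈ I, mvH (s i) (c i) (p i) x).det) :=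
    fun I _ => (mvMain hs hc).1.const_mul _
  unfold mvMD mvMV
  refine ⟨integrable_finsetSum _ hIntg, ?_⟩
  rw [integral_finsetSum _ hIntg]
  refine Finset.sum_congr rfl fun I _ => ?_
  rw [integral_const_mul, (mvMain hs hc).2, mvS]

theorem mvMV_block [Fintype κ] {s : ι ⊕ κ → Finset α} {p : ι ⊕ κ → α → (ι ⊕ κ) → ℝ}
    (hs : ∀ i, (s i).Nonempty)
    (hp : ∀ i, ∀ a ∈ s (Sum.inl i), ∀ t, p (Sum.inl i) a (Sum.inr t) = 0) :
    mvMV (fun i => convexHull ℝ (p i '' (s i : Set α))) =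
      mvMV (fun i : ι => convexHull ℝ
        ((fun a (r : ι) => p (Sum.inl i) a (Sum.inl r)) '' (s (Sum.inl i) : Set α))) *
      mvMV (fun i : κ => convexHull ℝ
        ((fun a (r : κ) => p (Sum.inr i) a (Sum.inr r)) '' (s (Sum.inr i) : Set α))) := by
  classical
  obtain ⟨hi0, he0⟩ := mvMV_eq (c := fun _ _ => 1) (p := p) hs (fun _ _ _ => one_pos)
  obtain ⟨-, he1⟩ := mvMV_eq (c := fun _ _ => 1)
    (p := fun (i : ι) a (r : ι) => p (Sum.inl i) a (Sum.inl r)) (s := fun i => s (Sum.inl i))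
    (fun i => hs (Sum.inl i)) (fun _ _ _ => one_pos)
  have he2 : ∀ y : ι → ℝ, _ := fun y => (mvMV_eq
    (c := fun (i : κ) a => Real.exp ((fun r : ι => p (Sum.inr i) a (Sum.inl r)) ⬝ᵥ y))
    (p := fun (i : κ) a (r : κ) => p (Sum.inr i) a (Sum.inr r)) (s := fun i => s (Sum.inr i))
    (fun i => hs (Sum.inr i)) (fun _ _ _ => Real.exp_pos _)).2
  rw [← he0, ← he1]
  have hdot : ∀ (q : (ι ⊕ κ) → ℝ) (y : ι → ℝ) (z : κ → ℝ), q ⬝ᵥ (Sum.elim y z) =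
      (fun r => q (Sum.inl r)) ⬝ᵥ y + (fun r => q (Sum.inr r)) ⬝ᵥ z := by
    intro q y z
    simp [dotProduct, Fintype.sum_sum_type]
  have hW1 : ∀ (y : ι → ℝ) (z : κ → ℝ) (i : ι), ∀ a ∈ s (Sum.inl i),
      mvW (s (Sum.inl i)) (fun _ => 1) (p (Sum.inl i)) (Sum.elim y z) a =
      mvW (s (Sum.inl i)) (fun _ => 1) (fun a (r : ι) => p (Sum.inl i) a (Sum.inl r)) y a := by
    intro y z i a ha
    have h : ∀ a ∈ s (Sum.inl i), p (Sum.inl i) a ⬝ᵥ Sum.elim y z =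
        (fun (r : ι) => p (Sum.inl i) a (Sum.inl r)) ⬝ᵥ y := by
      intro a ha
      rw [hdot]
      have : (fun r => p (Sum.inl i) a (Sum.inr r)) = 0 := funext fun t => hp i a ha t
      rw [this, zero_dotProduct, add_zero]
    unfold mvW mvZ
    rw [h a ha]
    congr 1
    exact Finset.sum_congr rfl fun b hb => by rw [h b hb]
  have hW2 : ∀ (y : ι → ℝ) (z : κ → ℝ) (i : κ) (a : α),
      mvW (s (Sum.inr i)) (fun _ => 1) (p (Sum.inr i)) (Sum.elim y z) a =
      mvW (s (Sum.inr i)) (fun a => Real.exp ((fun r : ι => p (Sum.inr i) a (Sum.inl r)) ⬝ᵥ y))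
        (fun a (r : κ) => p (Sum.inr i) a (Sum.inr r)) z a := by
    intro y z i a
    unfold mvW mvZ
    simp only [hdot, Real.exp_add, one_mul]
  have hblock : ∀ (y : ι → ℝ) (z : κ → ℝ),
      (mvMD fun i => mvH (s i) (fun _ => 1) (p i) (Sum.elim y z)) =
      (mvMD fun i : ι => mvH (s (Sum.inl i)) (fun _ => 1)
        (fun a (r : ι) => p (Sum.inl i) a (Sum.inl r)) y) *
      (mvMD fun i : κ => mvH (s (Sum.inr i))
        (fun a => Real.exp ((fun r : ι => p (Sum.inr i) a (Sum.inl r)) ⬝ᵥ y))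
        (fun a (r : κ) => p (Sum.inr i) a (Sum.inr r)) z) := by
    intro y z
    have hz : ∀ (i : ι) (t : κ), ∑ a ∈ s (Sum.inl i),
        mvW (s (Sum.inl i)) (fun _ => 1) (p (Sum.inl i)) (Sum.elim y z) a *
          p (Sum.inl i) a (Sum.inr t) = 0 := fun i t =>
      Finset.sum_eq_zero fun a ha => by rw [hp i a ha, mul_zero]
    have hsum : ∀ (i : ι) (g : α → ℝ), ∑ a ∈ s (Sum.inl i),
        mvW (s (Sum.inl i)) (fun _ => 1) (p (Sum.inl i)) (Sum.elim y z) a * g a =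
        ∑ a ∈ s (Sum.inl i), mvW (s (Sum.inl i)) (fun _ => 1)
          (fun a (r : ι) => p (Sum.inl i) a (Sum.inl r)) y a * g a := fun i g =>
      Finset.sum_congr rfl fun a ha => by rw [hW1 y z i a ha]
    rw [mvMD_block]
    · congr 2
      · ext i r t
        simp only [toBlocks₁₁, mvH, of_apply]
        rw [hsum, hsum, hsum]
      · ext i r t
        simp only [toBlocks₂₂, mvH, of_apply, hW2]
    · intro i r t
      simp only [mvH, of_apply]
      rw [hz, mul_zero, sub_zero]
      exact Finset.sum_eq_zero fun a ha => by rw [hp i a ha, mul_zero, mul_zero]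
    · intro i r t
      simp only [mvH, of_apply]
      rw [hz, zero_mul, sub_zero]
      exact Finset.sum_eq_zero fun a ha => by rw [hp i a ha, zero_mul, mul_zero]
  have hmp := volume_measurePreserving_sumPiEquivProdPi_symm (fun _ : ι ⊕ κ => ℝ)
  have hcoe : ∀ q : (ι → ℝ) × (κ → ℝ), (MeasurableEquiv.sumPiEquivProdPi (fun _ : ι ⊕ κ => ℝ)).symm q
      = Sum.elim q.1 q.2 := by
    intro q
    ext (i | i) <;> rfl
  have hi1 := hmp.integrable_comp_of_integrable hi0
  rw [← hmp.integral_comp (MeasurableEquiv.measurableEmbedding _)]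
  have hfun : (fun q : (ι → ℝ) × (κ → ℝ) => mvMD fun i => mvH (s i) (fun _ => 1) (p i)
      ((MeasurableEquiv.sumPiEquivProdPi (fun _ : ι ⊕ κ => ℝ)).symm q)) = fun q =>
      (mvMD fun i : ι => mvH (s (Sum.inl i)) (fun _ => 1)
        (fun a (r : ι) => p (Sum.inl i) a (Sum.inl r)) q.1) *
      (mvMD fun i : κ => mvH (s (Sum.inr i))
        (fun a => Real.exp ((fun r : ι => p (Sum.inr i) a (Sum.inl r)) ⬝ᵥ q.1))
        (fun a (r : κ) => p (Sum.inr i) a (Sum.inr r)) q.2) := by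
    funext q
    rw [hcoe, hblock]
  have hi2 : Integrable (fun q : (ι → ℝ) × (κ → ℝ) => mvMD fun i => mvH (s i) (fun _ => 1) (p i)
      ((MeasurableEquiv.sumPiEquivProdPi (fun _ : ι ⊕ κ => ℝ)).symm q)) (volume.prod volume) := hi1
  change ∫ q, _ ∂(volume.prod volume) = _
  rw [hfun] at hi2 ⊢
  rw [integral_prod _ hi2]
  simp only [integral_const_mul]
  rw [← integral_mul_const]
  refine integral_congr_ae (Filter.Eventually.of_forall fun y => ?_)
  simp only
  rw [he2 y]

end MVaux


lemma mvInt_matrix {n : ℕ} (φ : (Fin n → ℝ) →ₗ[ℝ] (Fin n → ℝ))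
    (h : ∀ x, IsLatticePt x → IsLatticePt (φ x)) : ∃ z : ℤ, LinearMap.det φ = (z : ℝ) := by
  have h1 : ∀ i j, ∃ z : ℤ, LinearMap.toMatrix' φ i j = (z : ℝ) := by
    intro i j
    rw [LinearMap.toMatrix'_apply]
    refine h _ (fun t => ?_) i
    by_cases ht : t = j
    · subst ht; exact ⟨1, by simp⟩
    · exact ⟨0, by simp [ht]⟩
  choose A hA using h1
  refine ⟨(Matrix.of A).det, ?_⟩
  rw [← LinearMap.det_toMatrix']
  have : LinearMap.toMatrix' φ = (Matrix.of A).map (Int.castRingHom ℝ) := by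
    ext i j
    simp [hA]
  rw [this, ← RingHom.mapMatrix_apply, ← RingHom.map_det]
  rfl

lemma mvDet_one {n : ℕ} (φ : (Fin n → ℝ) ≃ₗ[ℝ] (Fin n → ℝ))
    (h : ∀ x, IsLatticePt x ↔ IsLatticePt (φ x)) :
    |LinearMap.det (φ : (Fin n → ℝ) →ₗ[ℝ] (Fin n → ℝ))| = 1 := by
  obtain ⟨a, ha⟩ := mvInt_matrix (φ : (Fin n → ℝ) →ₗ[ℝ] (Fin n → ℝ)) fun x hx => (h x).1 hx
  obtain ⟨b, hb⟩ := mvInt_matrix (φ.symm : (Fin n → ℝ) →ₗ[ℝ] (Fin n → ℝ)) fun x hx => by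
    rw [h]
    simpa using hx
  have hab : a * b = 1 := by
    have := LinearEquiv.det_mul_det_symm φ
    rw [ha, hb] at this
    exact_mod_cast this
  rw [ha]
  have := Int.isUnit_iff.1 (IsUnit.of_mul_eq_one b hab)
  rcases this with rfl | rfl <;> simp

lemma mvReindex_volume {n : ℕ} {ι : Type*} [Fintype ι] (e : ι ≃ Fin n) (S : Set (Fin n → ℝ)) :
    volume ((fun (y : Fin n → ℝ) (i : ι) => y (e i)) '' S) = volume S := by
  have hmp := volume_measurePreserving_piCongrLeft (fun _ : Fin n => ℝ) e
  rw [← hmp.measure_preimage_equiv S]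
  congr 1
  have key : ∀ y : Fin n → ℝ,
      MeasurableEquiv.piCongrLeft (fun _ : Fin n => ℝ) e (fun i => y (e i)) = y := by
    intro y
    ext j
    obtain ⟨i, rfl⟩ := e.surjective j
    rw [MeasurableEquiv.piCongrLeft_apply_apply]
  ext w
  constructor
  · rintro ⟨y, hy, rfl⟩
    rw [Set.mem_preimage, key]
    exact hy
  · intro hw
    refine ⟨_, hw, ?_⟩
    ext i
    simp only
    rw [MeasurableEquiv.piCongrLeft_apply_apply]

/-- multiplicativity of the mixed volume when the first k polytopes lie in
a k-dimensional rational subspace L. The subspace is brought into the coordinate form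
{x : x_j = 0 for j ≥ k} by a lattice-preserving linear automorphism φ, so that the mixed
volume of P₁,…,P_k inside L (w.r.t. the lattice L ∩ ℤⁿ) is computed in the first k
coordinates and the mixed volume of the projections π(P_{k+1}),…,π(Pₙ) (w.r.t. the
quotient lattice) in the last n−k coordinates. -/
theorem mixedVol_mul_of_subspace {n k : ℕ} (hk1 : 1 ≤ k) (hkn : k ≤ n)
    (L : Submodule ℝ (Fin n → ℝ))
    (hLdim : Module.finrank ℝ L = k)
    (hLrat : L = Submodule.span ℝ ((L : Set (Fin n → ℝ)) ∩ {x | IsLatticePt x}))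
    (P : Fin n → Set (Fin n → ℝ)) (hP : ∀ i, IsLatticePolytope (P i))
    (hPL : ∀ i : Fin n, (i : ℕ) < k → P i ⊆ (L : Set (Fin n → ℝ)))
    (φ : (Fin n → ℝ) ≃ₗ[ℝ] (Fin n → ℝ))
    (hφlat : ∀ x, IsLatticePt x ↔ IsLatticePt (φ x))
    (hφL : ∀ x, x ∈ L ↔ ∀ j : Fin n, k ≤ (j : ℕ) → φ x j = 0) :
    mixedVol P =
      mixedVol (fun i : Fin k =>
          (fun x (j : Fin k) => x (Fin.castLE hkn j)) '' (⇑φ '' P (Fin.castLE hkn i))) *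
      mixedVol (fun i : Fin (n - k) =>
          (fun x (j : Fin (n - k)) => x (Fin.cast (Nat.add_sub_cancel' hkn) (Fin.natAdd k j))) ''
            (⇑φ '' P (Fin.cast (Nat.add_sub_cancel' hkn) (Fin.natAdd k i)))) := by
  classical
  choose V hVne hVlat hPV using hP
  let e : Fin k ⊕ Fin (n - k) ≃ Fin n :=
    finSumFinEquiv.trans (finCongr (Nat.add_sub_cancel' hkn))
  have he1 : ∀ i, e (Sum.inl i) = Fin.castLE hkn i := fun i => by ext; simp [e]
  have he2 : ∀ i, e (Sum.inr i) = Fin.cast (Nat.add_sub_cancel' hkn) (Fin.natAdd k i) :=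
    fun i => by ext; simp [e]
  let ρ : (Fin n → ℝ) →ₗ[ℝ] (Fin k ⊕ Fin (n - k) → ℝ) := LinearMap.funLeft ℝ ℝ e
  let ψ : (Fin n → ℝ) →ₗ[ℝ] (Fin k ⊕ Fin (n - k) → ℝ) :=
    ρ ∘ₗ (φ : (Fin n → ℝ) →ₗ[ℝ] (Fin n → ℝ))
  have hψ : ∀ x i, ψ x i = φ x (e i) := fun x i => rfl
  have hvol : ∀ S : Set (Fin n → ℝ), volume (ψ '' S) = volume S := by
    intro S
    have h1 : ψ '' S = (fun (y : Fin n → ℝ) i => y (e i)) ''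
        ((φ : (Fin n → ℝ) →ₗ[ℝ] (Fin n → ℝ)) '' S) := by
      rw [Set.image_image]; rfl
    rw [h1, mvReindex_volume, Measure.addHaar_image_linearMap, mvDet_one φ hφlat]
    simp
  have hmain := mvMV_block (ι := Fin k) (κ := Fin (n - k)) (s := fun i => V (e i))
    (p := fun _ v => ψ v) (fun i => hVne _) (by
      intro i a ha t
      rw [hψ, he2]
      refine (hφL a).1 ?_ _ (by simp)
      refine hPL (e (Sum.inl i)) (by rw [he1]; simp) ?_
      rw [hPV]
      exact subset_convexHull ℝ _ ha)
  have hL : mixedVol P = mvMV (fun i => convexHull ℝ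
      ((fun v => ψ v) '' (V (e i) : Set (Fin n → ℝ)))) := by
    unfold mixedVol mvMV
    symm
    refine Fintype.sum_equiv e.finsetCongr _ _ fun I => ?_
    have hcard : Fintype.card (Fin k ⊕ Fin (n - k)) = n := by
      rw [Fintype.card_congr e, Fintype.card_fin]
    rw [hcard, Equiv.finsetCongr_apply, Finset.card_map, Finset.sum_map, ← hvol,
      Set.image_finsetSum]
    congr 4
    funext i
    change convexHull ℝ (ψ '' (V (e i) : Set (Fin n → ℝ))) = ψ '' P (e i)
    rw [← LinearMap.image_convexHull, ← hPV]
  have hR : ∀ (m : ℕ) (g : Fin m → Fin n) (f : Fin m → Fin n),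
      mixedVol (fun i => (fun (x : Fin n → ℝ) (j : Fin m) => x (g j)) '' (⇑φ '' P (f i))) =
      mvMV (fun i => convexHull ℝ ((fun v (r : Fin m) => φ v (g r)) ''
        (V (f i) : Set (Fin n → ℝ)))) := by
    intro m g f
    unfold mixedVol mvMV
    rw [Fintype.card_fin]
    congr 1
    funext I
    congr 4
    funext i
    beta_reduce
    rw [hPV, Set.image_image]
    exact LinearMap.image_convexHull
      ((LinearMap.funLeft ℝ ℝ g) ∘ₗ (φ : (Fin n → ℝ) →ₗ[ℝ] (Fin n → ℝ))) _
  rw [hL, hmain, hR, hR]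
  simp only [hψ, he1, he2]
end
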